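/- There exist constants γ > 0 and C > 0 such that for every n ∈ ℕ, every ε ∈ (0,1), and every real t with |t| ≥ 1, there exist integers p ≥ 1 and k ≥ 1 satisfying k·5^p ≤ C·|t|·exp(γ·√(log((n+2)·|t|/ε))) and ‖(U_p(t/k))^k·ψ_n − e^(−i(n+1/2)t)·ψ_n‖_{L²} ≤ ε; that is, the state U(t)|ψ_n⟩ can be prepared within precision ε by a product of at most O(|t|·exp(γ·√(log((n+2)|t|/ε)))) Trotter–Suzuki exponentials. -/

import Mathlib

/-!
The operators `M(a)` and `P(b)` are metaplectic: on the span of Gaussian wave packets they act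
through `SL(2, ℝ)`, that is (in complex coordinates) through `SU(1, 1)`.  A packet is recorded by a
vector `v = (y, z) ∈ ℂ × ℂ` with `|y|² - |z|² = 1`, together
with a square root `w` of `1 / (y + z)`; the `n`-th packet is
`w · N_n · exp (-((y - z) / (y + z)) x² / 2)` times a rescaled Hermite polynomial, and `ψ_n` itself
is the packet of `(1, 0)` with `w = 1`.  On `v` the operators `M(a)` and `P(b)` are the shears
`1 + i a · nilM` and `1 + i b · nilP`, and the exact evolution is the rotation
`rotR s = diag (e^{is}, e^{-is})`.  No truncation in energy is needed, and the operator problem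
becomes a problem about `2 × 2` matrices with entries that are entire functions of the step.

For the matrices, Suzuki's recursion raises the order: the leading error of a time-symmetric formula has odd
order, and the choice of `s_p` cancels the leading error (`suz_order`).  The error of the formula
with parameter `q` is `s^{2q+3}` times an entire function, and the maximum modulus principle on the
disc of radius `5^{-q}`, where all matrices are bounded, gives
`‖suz strang q s - rotR s‖ ≤ 12 (5^q |s|)^{2q+3}` (`suz_error`).  Since rotations are contractions,
these errors add up linearly over the steps (`iterate_packet`).  The sign of the square root `w` is
followed by the condition `Re (w e^{iτ/2}) > 0`, which persists because each elementary step is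
small.

Conversely, a packet whose vector is within `d` of `(e^{iτ}, 0)` equals `ψ_n` up to a phase, a
dilation and a chirp `e^{iax²}`, each within `O(d)` of its target, so its `L²` distance to
`e^{-i(n+1/2)τ} ψ_n` is at most `40 (n+2) d` (`l2norm_packet_sub`).  This uses the `L²` norms
of `x² ψ_n` and `x ψ_n'`, which follow from the three-term recurrence and orthogonality.

With `X = log ((n+2)|t|/ε)`, taking `q ≈ √X` and `k ≈ 32 |t| e^{3q}` makes the total error of size
`(n+2) |t| e^{-2q²} ≤ ε`, at the cost `k 5^{q+1} = O (|t| e^{5q})` (`final_choice`).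
-/
open MeasureTheory Complex
open scoped BigOperators Matrix Kronecker

noncomputable section

/-- The `n`-th physicists' Hermite polynomial. -/
def hermiteH (n : ℕ) (x : ℝ) : ℝ :=
  (-1 : ℝ) ^ n * Real.exp (x ^ 2) * iteratedDeriv n (fun y => Real.exp (-y ^ 2)) x

/-- The `n`-th Hermite function. -/
def hermiteFn (n : ℕ) (x : ℝ) : ℝ :=
  (1 / Real.sqrt (2 ^ n * n.factorial * Real.sqrt Real.pi)) * Real.exp (-x ^ 2 / 2) * hermiteH n x

/-- The Fourier transform `(Ff)(ξ) = (2π)^{-1/2} ∫ f(x) e^{-iξx} dx`. -/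
def fourierT (f : ℝ → ℂ) (ξ : ℝ) : ℂ :=
  (((2 * Real.pi) ^ (-(1 : ℝ) / 2) : ℝ) : ℂ) * ∫ x : ℝ, f x * Complex.exp (-Complex.I * ξ * x)

/-- The inverse Fourier transform `(F⁻¹g)(x) = (2π)^{-1/2} ∫ g(ξ) e^{iξx} dξ`. -/
def fourierTInv (g : ℝ → ℂ) (x : ℝ) : ℂ :=
  (((2 * Real.pi) ^ (-(1 : ℝ) / 2) : ℝ) : ℂ) * ∫ ξ : ℝ, g ξ * Complex.exp (Complex.I * ξ * x)

/-- The multiplication operator `M(a) : f ↦ (x ↦ e^{-iax²} f(x))`. -/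
def Mop (a : ℝ) (f : ℝ → ℂ) : ℝ → ℂ := fun x => Complex.exp (-Complex.I * a * x ^ 2) * f x

/-- The operator `P(a) : f ↦ F⁻¹(ξ ↦ e^{-iaξ²} (Ff)(ξ))`. -/
def Pop (a : ℝ) (f : ℝ → ℂ) : ℝ → ℂ :=
  fourierTInv fun ξ => Complex.exp (-Complex.I * a * ξ ^ 2) * fourierT f ξ

/-- The continuous-variable Trotter–Suzuki approximants:
`U₁(s) = M(s/4) ∘ P(s/2) ∘ M(s/4)` and
`U_{p+1}(s) = U_p(s_p)² ∘ U_p(s - 4s_p) ∘ U_p(s_p)²`, `s_p = s/(4 - 4^{1/(2p+1)})`. -/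
def Uapprox : ℕ → ℝ → (ℝ → ℂ) → (ℝ → ℂ)
  | 0, _, f => f
  | 1, s, f => Mop (s / 4) (Pop (s / 2) (Mop (s / 4) f))
  | p + 2, s, f =>
      let sp := s / (4 - (4 : ℝ) ^ ((1 : ℝ) / (2 * ((p : ℝ) + 1) + 1)))
      Uapprox (p + 1) sp (Uapprox (p + 1) sp (Uapprox (p + 1) (s - 4 * sp)
        (Uapprox (p + 1) sp (Uapprox (p + 1) sp f))))

/-- The `n`-th Hermite function, as a complex-valued function. -/
def hermiteFnC (n : ℕ) : ℝ → ℂ := fun x => (hermiteFn n x : ℂ)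

/-- The L² norm `‖f‖ = (∫ |f(x)|² dx)^{1/2}`. -/
def l2norm (f : ℝ → ℂ) : ℝ := Real.sqrt (∫ x : ℝ, Complex.normSq (f x))

/-! ### Order of product formulas in a normed algebra -/

/-- `X s = R (a s) + O (s ^ m)` with an entire remainder: the quotient `(X s - R (a s)) / s ^ m`
extends to an entire function whose value at `0` is the leading error coefficient `e`. -/
def ErrOrder {A : Type*} [NormedRing A] [NormedAlgebra ℂ A] (R X : ℂ → A) (a : ℂ) (m : ℕ)
    (e : A) : Prop :=
  ∃ F : ℂ → A, Differentiable ℂ F ∧ F 0 = e ∧ ∀ s, X s = R (a * s) + s ^ m • F s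

section order
variable {A : Type*} [NormedRing A] [NormedAlgebra ℂ A]

/-- Leading error coefficients of the factors of a product add up, when the reference `R` is a
one-parameter group. -/
theorem ErrOrder.mul {R X Y : ℂ → A} {a b : ℂ} {m : ℕ} {e f : A} (hm : m ≠ 0)
    (hRd : Differentiable ℂ R) (hR0 : R 0 = 1) (hR : ∀ s t, R (s + t) = R s * R t)
    (hX : ErrOrder R X a m e) (hY : ErrOrder R Y b m f) :
    ErrOrder R (fun s => X s * Y s) (a + b) m (e + f) := by
  obtain ⟨F, hF, hF0, hXF⟩ := hX
  obtain ⟨G, hG, hG0, hYG⟩ := hY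
  refine ⟨fun s => F s * R (b * s) + R (a * s) * G s + s ^ m • (F s * G s), ?_, ?_, ?_⟩
  · fun_prop
  · simp [hF0, hG0, hR0, hm]
  · intro s
    simp only [hXF, hYG, add_mul, mul_add, hR, smul_mul_assoc, mul_smul_comm, smul_add]
    abel

theorem ErrOrder.scale {R X : ℂ → A} {m : ℕ} {e : A} (hX : ErrOrder R X 1 m e) (a : ℂ) :
    ErrOrder R (fun s => X (a * s)) a m (a ^ m • e) := by
  obtain ⟨F, hF, hF0, hXF⟩ := hX
  refine ⟨fun s => a ^ m • F (a * s), ?_, ?_, ?_⟩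
  · fun_prop
  · simp [hF0]
  · intro s
    simp only [hXF, one_mul, mul_pow, smul_smul, mul_comm (a ^ m)]

/-- A vanishing leading coefficient raises the order by one. -/
theorem ErrOrder.succ [CompleteSpace A] {R X : ℂ → A} {m : ℕ} {a : ℂ} (hX : ErrOrder R X a m 0) :
    ∃ e, ErrOrder R X a (m + 1) e := by
  obtain ⟨F, hF, hF0, hXF⟩ := hX
  refine ⟨_, dslope F 0, ?_, rfl, ?_⟩
  · rw [← differentiableOn_univ] at hF ⊢
    exact (Complex.differentiableOn_dslope Filter.univ_mem).2 hF
  · intro s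
    have := sub_smul_dslope F 0 s
    simp only [sub_zero, hF0] at this
    rw [hXF, pow_succ, mul_smul, this]

/-- A time-symmetric formula (`X s * X (-s) = 1`) has no leading error term of even order: the
coefficient of `s ^ m` in `X s * X (-s)` is `2 e`. -/
theorem ErrOrder.eq_zero_of_symm {R X : ℂ → A} {m : ℕ} {e : A} (hm : m ≠ 0)
    (hev : Even m) (hRd : Differentiable ℂ R) (hR0 : R 0 = 1)
    (hR : ∀ s t, R (s + t) = R s * R t)
    (hX : ErrOrder R X 1 m e) (hs : ∀ s, X s * X (-s) = 1) : e = 0 := by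
  obtain ⟨F, hF, hF0, hXF⟩ := hX
  set B : ℂ → A := fun s => F s * R (-s) + R s * F (-s) + s ^ m • (F s * F (-s)) with hB
  have hBc : Continuous B := by
    have : Differentiable ℂ B := by fun_prop
    exact this.continuous
  have hB0 : ∀ s ≠ 0, B s = 0 := by
    intro s hs0
    have h1 := hs s
    have hRR : R s * R (-s) = 1 := by rw [← hR, add_neg_cancel, hR0]
    have h2 : s ^ m • B s = 0 := by
      simp only [hXF, one_mul, add_mul, mul_add, hRR, smul_mul_assoc, mul_smul_comm,
        hev.neg_pow] at h1
      have h3 := sub_eq_zero.2 h1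
      rw [← h3]
      simp only [hB, smul_add]
      abel
    exact (smul_eq_zero.1 h2).resolve_left (pow_ne_zero _ hs0)
  have : B 0 = 0 := by
    have hcl : IsClosed {s | B s = 0} := isClosed_eq hBc continuous_const
    have hd : Dense ({0}ᶜ : Set ℂ) := dense_compl_singleton 0
    have := hcl.closure_subset_iff.2 (fun s (hs : s ∈ ({0}ᶜ : Set ℂ)) => hB0 s hs)
    exact this (hd 0)
  have h2 : (2 : ℂ) • e = 0 := by
    rw [two_smul]
    simpa [hB, hR0, hF0, hm] using this
  simpa using h2

/-- Schwarz-type bound: an error of order `m` bounded by `M` on the disc of radius `ρ` is at most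
`M (|s| / ρ) ^ m` there, by the maximum modulus principle applied to the entire quotient. -/
theorem ErrOrder.norm_le [CompleteSpace A] {R X : ℂ → A} {m : ℕ} {e : A} (hX : ErrOrder R X 1 m e)
    {ρ M : ℝ} (hρ : 0 < ρ) (hM : ∀ s, ‖s‖ ≤ ρ → ‖X s - R s‖ ≤ M) {s : ℂ} (hs : ‖s‖ ≤ ρ) :
    ‖X s - R s‖ ≤ M * (‖s‖ / ρ) ^ m := by
  obtain ⟨F, hF, hF0, hXF⟩ := hX
  have hE : ∀ s, ‖X s - R s‖ = ‖s‖ ^ m * ‖F s‖ := by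
    intro s; rw [hXF]; simp [norm_smul]
  have key : ‖F s‖ ≤ M / ρ ^ m := by
    refine Complex.norm_le_of_forall_mem_frontier_norm_le (U := Metric.ball 0 ρ)
      Metric.isBounded_ball hF.diffContOnCl ?_ ?_
    · intro z hz
      rw [frontier_ball _ hρ.ne', mem_sphere_zero_iff_norm] at hz
      have := hM z hz.le
      rw [hE, hz] at this
      rw [le_div_iff₀ (by positivity)]
      linarith
    · rw [closure_ball _ hρ.ne']; simpa using hs
  rw [hE, div_pow]
  calc ‖s‖ ^ m * ‖F s‖ ≤ ‖s‖ ^ m * (M / ρ ^ m) := by gcongr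
    _ = _ := by ring

end order

/-! ### Suzuki recursion -/

/-- The ratio `s_p / s` for `p = q + 1`. -/
def suzQ (q : ℕ) : ℝ := 1 / (4 - (4 : ℝ) ^ ((1 : ℝ) / (2 * ((q : ℝ) + 1) + 1)))

theorem suzQ_aux (q : ℕ) : (1 : ℝ) ≤ (4 : ℝ) ^ ((1 : ℝ) / (2 * ((q : ℝ) + 1) + 1)) ∧
    (4 : ℝ) ^ ((1 : ℝ) / (2 * ((q : ℝ) + 1) + 1)) ≤ 2 := by
  constructor
  · apply Real.one_le_rpow (by norm_num) (by positivity)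
  · calc (4 : ℝ) ^ ((1 : ℝ) / (2 * ((q : ℝ) + 1) + 1)) ≤ (4 : ℝ) ^ ((1 : ℝ) / 2) := by
          apply Real.rpow_le_rpow_of_exponent_le (by norm_num)
          apply one_div_le_one_div_of_le (by norm_num)
          have : (0 : ℝ) ≤ q := by positivity
          linarith
      _ = 2 := by
          rw [← Real.sqrt_eq_rpow, show (4 : ℝ) = 2 ^ 2 by norm_num]
          exact Real.sqrt_sq (by norm_num)

/-- All five substeps of Suzuki's formula are at most as long as the full step. -/
theorem suzQ_bounds (q : ℕ) : |suzQ q| ≤ 1 ∧ |1 - 4 * suzQ q| ≤ 1 := by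
  obtain ⟨h1, h2⟩ := suzQ_aux q
  unfold suzQ
  set c := (4 : ℝ) ^ ((1 : ℝ) / (2 * ((q : ℝ) + 1) + 1))
  have h3 : 1 - 4 * (1 / (4 - c)) = - (c / (4 - c)) := by
    have : 4 - c ≠ 0 := by linarith
    field_simp; ring
  rw [h3, abs_neg, abs_of_nonneg (by apply div_nonneg <;> linarith),
    abs_of_nonneg (by apply div_nonneg <;> linarith)]
  constructor <;> rw [div_le_one (by linarith)] <;> linarith

/-- The order condition: the leading error terms of the five factors, of order `2q + 3`, cancel. -/
theorem suzQ_order (q : ℕ) : 4 * suzQ q ^ (2 * q + 3) + (1 - 4 * suzQ q) ^ (2 * q + 3) = 0 := by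
  obtain ⟨h1, h2⟩ := suzQ_aux q
  have h4 : ((4 : ℝ) ^ ((1 : ℝ) / (2 * ((q : ℝ) + 1) + 1))) ^ (2 * q + 3) = 4 := by
    rw [← Real.rpow_natCast, ← Real.rpow_mul (by norm_num)]
    push_cast
    rw [show (1 : ℝ) / (2 * ((q : ℝ) + 1) + 1) * (2 * q + 3) = 1 by field_simp; ring]
    simp
  unfold suzQ
  set c := (4 : ℝ) ^ ((1 : ℝ) / (2 * ((q : ℝ) + 1) + 1))
  have h3 : 1 - 4 * (1 / (4 - c)) = - (c * (1 / (4 - c))) := by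
    have : 4 - c ≠ 0 := by linarith
    field_simp; ring
  have hodd : Odd (2 * q + 3) := ⟨q + 1, by ring⟩
  rw [h3, hodd.neg_pow, mul_pow, h4]
  ring

/-- Suzuki's recursion started from the base formula `S`, in an abstract monoid. The index is shifted
by one: `suz S q` corresponds to `U_{q+1}`. -/
def suz {A : Type*} [Monoid A] (S : ℂ → A) : ℕ → ℂ → A
  | 0, s => S s
  | q + 1, s =>
      suz S q (suzQ q * s) * (suz S q (suzQ q * s) * (suz S q ((1 - 4 * suzQ q : ℝ) * s) *
        (suz S q (suzQ q * s) * suz S q (suzQ q * s))))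

theorem suz_symm {A : Type*} [Monoid A] {S : ℂ → A} (hS : ∀ s, S s * S (-s) = 1) (q : ℕ) (s : ℂ) :
    suz S q s * suz S q (-s) = 1 := by
  induction q generalizing s with
  | zero => exact hS s
  | succ q ih =>
    have h : ∀ (u v : ℂ) (x : A), suz S q (u * v) * (suz S q (u * -v) * x) = x := by
      intro u v x
      rw [← mul_assoc, mul_neg, ih, one_mul]
    simp only [suz, mul_assoc, h]
    rw [mul_neg, ih]

theorem suz_norm {A : Type*} [NormedRing A] {S : ℂ → A} {c : ℝ} (hc : 0 ≤ c)
    (hS : ∀ s, ‖S s‖ ≤ Real.exp (c * ‖s‖)) (q : ℕ) (s : ℂ) :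
    ‖suz S q s‖ ≤ Real.exp (c * 5 ^ q * ‖s‖) := by
  induction q generalizing s with
  | zero => simpa [suz] using hS s
  | succ q ih =>
    obtain ⟨h1, h2⟩ := suzQ_bounds q
    have key : ∀ a : ℝ, |a| ≤ 1 → ‖suz S q (a * s)‖ ≤ Real.exp (c * 5 ^ q * ‖s‖) := by
      intro a ha
      refine (ih _).trans (Real.exp_le_exp.2 ?_)
      rw [norm_mul, Complex.norm_real, Real.norm_eq_abs]
      have : |a| * ‖s‖ ≤ 1 * ‖s‖ := by gcongr
      rw [one_mul] at this
      gcongr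
    have k1 := key _ h1
    have k2 := key _ h2
    have e : Real.exp (c * 5 ^ (q + 1) * ‖s‖) = Real.exp (c * 5 ^ q * ‖s‖) *
        (Real.exp (c * 5 ^ q * ‖s‖) * (Real.exp (c * 5 ^ q * ‖s‖) *
        (Real.exp (c * 5 ^ q * ‖s‖) * Real.exp (c * 5 ^ q * ‖s‖)))) := by
      simp only [← Real.exp_add]; congr 1; ring
    rw [e]
    simp only [suz]
    refine (norm_mul_le _ _).trans (mul_le_mul k1 ?_ (norm_nonneg _) (by positivity))
    refine (norm_mul_le _ _).trans (mul_le_mul k1 ?_ (norm_nonneg _) (by positivity))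
    refine (norm_mul_le _ _).trans (mul_le_mul k2 ?_ (norm_nonneg _) (by positivity))
    exact (norm_mul_le _ _).trans (mul_le_mul k1 k1 (norm_nonneg _) (by positivity))

/-- The `q`-th iterate of a symmetric second-order formula agrees with the group `R` up to
`O (s ^ (2q + 3))`: the Suzuki step kills the coefficient of order `2q + 3`, and symmetry kills the
next (even) one. -/
theorem suz_order {A : Type*} [NormedRing A] [NormedAlgebra ℂ A] [CompleteSpace A] {R S : ℂ → A}
    (hRd : Differentiable ℂ R) (hR0 : R 0 = 1) (hR : ∀ s t, R (s + t) = R s * R t)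
    (hS : ∀ s, S s * S (-s) = 1) (hRS : ErrOrder R S 1 2 0) (q : ℕ) :
    ∃ e, ErrOrder R (suz S q) 1 (2 * q + 3) e := by
  induction q with
  | zero => exact hRS.succ
  | succ q ih =>
    obtain ⟨e, he⟩ := ih
    have hm : 2 * q + 3 ≠ 0 := by omega
    have h1 := he.scale (suzQ q : ℂ)
    have h2 := he.scale ((1 - 4 * suzQ q : ℝ) : ℂ)
    have h3 := h1.mul hm hRd hR0 hR (h1.mul hm hRd hR0 hR (h2.mul hm hRd hR0 hR
      (h1.mul hm hRd hR0 hR h1)))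
    have h4 : ErrOrder R (suz S (q + 1)) 1 (2 * q + 3) 0 := by
      convert h3 using 1
      · rfl
      · push_cast; ring
      · have := congrArg (fun x : ℝ => (x : ℂ)) (suzQ_order q)
        push_cast at this
        rw [← zero_smul ℂ e, ← this]
        push_cast
        module
    obtain ⟨e', h5⟩ := h4.succ
    have := h5.eq_zero_of_symm (by omega) ⟨q + 2, by ring⟩ hRd hR0 hR (suz_symm hS (q + 1))
    subst this
    exact h5.succ

/-! ### The lifted linear dynamics on `ℂ × ℂ` -/

/-- The nilpotent generator `(y, z) ↦ (y + z, -(y + z))` of the action of `M`. -/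
abbrev nilM : (ℂ × ℂ) →L[ℂ] (ℂ × ℂ) :=
  (ContinuousLinearMap.fst ℂ ℂ ℂ + ContinuousLinearMap.snd ℂ ℂ ℂ).prod
    (-(ContinuousLinearMap.fst ℂ ℂ ℂ + ContinuousLinearMap.snd ℂ ℂ ℂ))

/-- The nilpotent generator `(y, z) ↦ (y - z, y - z)` of the action of `P`. -/
abbrev nilP : (ℂ × ℂ) →L[ℂ] (ℂ × ℂ) :=
  (ContinuousLinearMap.fst ℂ ℂ ℂ - ContinuousLinearMap.snd ℂ ℂ ℂ).prod
    (ContinuousLinearMap.fst ℂ ℂ ℂ - ContinuousLinearMap.snd ℂ ℂ ℂ)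

/-- The exact evolution `diag (e^{is}, e^{-is})`, with complex time. -/
def rotR (s : ℂ) : (ℂ × ℂ) →L[ℂ] (ℂ × ℂ) :=
  cexp (I * s) • ContinuousLinearMap.inl ℂ ℂ ℂ ∘L ContinuousLinearMap.fst ℂ ℂ ℂ +
    cexp (-(I * s)) • ContinuousLinearMap.inr ℂ ℂ ℂ ∘L ContinuousLinearMap.snd ℂ ℂ ℂ

theorem rotR_apply (s : ℂ) (v : ℂ × ℂ) :
    rotR s v = (cexp (I * s) * v.1, cexp (-(I * s)) * v.2) := by
  simp [rotR]

theorem rotR_add (s t : ℂ) : rotR (s + t) = rotR s * rotR t := by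
  refine ContinuousLinearMap.ext fun v => ?_
  ext <;> simp [rotR_apply, mul_add, Complex.exp_add, mul_left_comm, mul_comm]

theorem rotR_zero : rotR 0 = 1 := by
  ext <;> simp [rotR_apply]

theorem rotR_diff : Differentiable ℂ rotR := by
  unfold rotR
  fun_prop

theorem rotR_norm (s : ℂ) : ‖rotR s‖ ≤ Real.exp |s.im| := by
  refine ContinuousLinearMap.opNorm_le_bound _ (by positivity) fun v => ?_
  rw [rotR_apply, Prod.norm_def, Prod.norm_def]
  simp only [norm_mul, Complex.norm_exp]
  refine max_le ?_ ?_
  · refine mul_le_mul (Real.exp_le_exp.2 ?_) (le_max_left _ _) (norm_nonneg _) (by positivity)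
    simpa using neg_le_abs s.im
  · refine mul_le_mul (Real.exp_le_exp.2 ?_) (le_max_right _ _) (norm_nonneg _) (by positivity)
    simpa using le_abs_self s.im

/-- The matrix of `U₁(s)`, with complex step. -/
def strang (s : ℂ) : (ℂ × ℂ) →L[ℂ] (ℂ × ℂ) :=
  (1 + (I * s / 4) • nilM) * ((1 + (I * s / 2) • nilP) * (1 + (I * s / 4) • nilM))

theorem shearM_apply (a : ℂ) (v : ℂ × ℂ) :
    (1 + a • nilM) v = (v.1 + a * (v.1 + v.2), v.2 - a * (v.1 + v.2)) := by
  ext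
  · simp
  · simp; ring

theorem shearP_apply (a : ℂ) (v : ℂ × ℂ) :
    (1 + a • nilP) v = (v.1 + a * (v.1 - v.2), v.2 + a * (v.1 - v.2)) := by
  ext <;> simp

theorem strang_symm (s : ℂ) : strang s * strang (-s) = 1 := by
  refine ContinuousLinearMap.ext fun v => ?_
  simp only [strang, mul_apply_eq_comp, shearM_apply, shearP_apply,
    one_apply_eq_self]
  ext
  · simp only; ring
  · simp only; ring

theorem nilM_norm : ‖nilM‖ ≤ 2 := by
  refine ContinuousLinearMap.opNorm_le_bound _ (by positivity) fun v => ?_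
  have h1 := norm_fst_le v
  have h2 := norm_snd_le v
  have h3 := norm_add_le v.1 v.2
  rw [Prod.norm_def (nilM v)]
  simp only [ContinuousLinearMap.prod_apply, add_apply,
    ContinuousLinearMap.coe_fst', ContinuousLinearMap.coe_snd', neg_apply,
    norm_neg, max_self]
  linarith

theorem nilP_norm : ‖nilP‖ ≤ 2 := by
  refine ContinuousLinearMap.opNorm_le_bound _ (by positivity) fun v => ?_
  have h1 := norm_fst_le v
  have h2 := norm_snd_le v
  have h3 := norm_sub_le v.1 v.2
  rw [Prod.norm_def (nilP v)]
  simp only [ContinuousLinearMap.prod_apply, sub_apply,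
    ContinuousLinearMap.coe_fst', ContinuousLinearMap.coe_snd', max_self]
  linarith

theorem shear_norm {N : (ℂ × ℂ) →L[ℂ] (ℂ × ℂ)} (hN : ‖N‖ ≤ 2) (a : ℂ) :
    ‖1 + a • N‖ ≤ Real.exp (2 * ‖a‖) := by
  calc ‖1 + a • N‖ ≤ ‖(1 : (ℂ × ℂ) →L[ℂ] (ℂ × ℂ))‖ + ‖a‖ * ‖N‖ := by
        rw [← norm_smul]; exact norm_add_le _ _
    _ ≤ 1 + ‖a‖ * 2 := by
        have : ‖(1 : (ℂ × ℂ) →L[ℂ] (ℂ × ℂ))‖ ≤ 1 := ContinuousLinearMap.norm_id_le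
        gcongr
    _ ≤ Real.exp (2 * ‖a‖) := by
        have := Real.add_one_le_exp (2 * ‖a‖); linarith

theorem strang_norm (s : ℂ) : ‖strang s‖ ≤ Real.exp (2 * ‖s‖) := by
  have e : Real.exp (2 * ‖s‖) = Real.exp (2 * ‖I * s / 4‖) *
      (Real.exp (2 * ‖I * s / 2‖) * Real.exp (2 * ‖I * s / 4‖)) := by
    simp only [← Real.exp_add]; congr 1; simp; ring
  rw [e]
  refine (norm_mul_le _ _).trans (mul_le_mul (shear_norm nilM_norm _) ?_ (norm_nonneg _)
    (by positivity))
  exact (norm_mul_le _ _).trans (mul_le_mul (shear_norm nilP_norm _) (shear_norm nilM_norm _)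
    (norm_nonneg _) (by positivity))

/-- The symmetric splitting agrees with the rotation up to `O (s ^ 3)`; it is stated as order `2`
with vanishing coefficient, which is the form `suz_order` starts from. -/
theorem strang_order : ErrOrder rotR strang 1 2 0 := by
  have hd : Differentiable ℂ strang := by unfold strang; fun_prop
  have h0 : ErrOrder rotR strang 1 0 0 := by
    refine ⟨fun s => strang s - rotR s, hd.sub rotR_diff, ?_, fun s => by simp⟩
    refine ContinuousLinearMap.ext fun v => ?_
    simp [strang, rotR_zero, mul_apply_eq_comp]
  -- the first-order coefficient is the difference of the derivatives at `0`
  have hder : HasDerivAt (fun s => strang s - rotR s) 0 0 := by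
    have l : ∀ c : ℂ, HasDerivAt (fun s : ℂ => I * s / c) (I / c) 0 := fun c => by
      simpa using ((hasDerivAt_id (0 : ℂ)).const_mul I).div_const c
    have hM := ((l 4).smul_const nilM).const_add 1
    have hP := ((l 2).smul_const nilP).const_add 1
    have e1 : HasDerivAt (fun s : ℂ => cexp (I * s)) I 0 := by
      simpa using ((hasDerivAt_id (0 : ℂ)).const_mul I).cexp
    have e2 : HasDerivAt (fun s : ℂ => cexp (-(I * s))) (-I) 0 := by
      simpa using ((hasDerivAt_id (0 : ℂ)).const_mul I).neg.cexp
    have := (hM.mul (hP.mul hM)).sub ((e1.smul_const (ContinuousLinearMap.inl ℂ ℂ ℂ ∘L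
      ContinuousLinearMap.fst ℂ ℂ ℂ)).add (e2.smul_const (ContinuousLinearMap.inr ℂ ℂ ℂ ∘L
      ContinuousLinearMap.snd ℂ ℂ ℂ)))
    refine this.congr_deriv ?_
    refine ContinuousLinearMap.ext fun v => ?_
    ext
    · simp; ring
    · simp; ring
  obtain ⟨-, F, hF, -, h1⟩ := h0.succ
  have hF0' : F 0 = 0 := by
    have : HasDerivAt (fun s => strang s - rotR s) (F 0) 0 := by
      have h2 : (fun s => strang s - rotR s) = fun s : ℂ => s • F s := by
        funext s; rw [h1]; simp
      rw [h2]
      have h3 := (hasDerivAt_id (0 : ℂ)).smul (hF 0).hasDerivAt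
      exact h3.congr_deriv (by simp)
    exact this.unique hder
  obtain ⟨e, he⟩ := ErrOrder.succ ⟨F, hF, hF0', h1⟩
  have := he.eq_zero_of_symm (by norm_num) ⟨1, rfl⟩ rotR_diff rotR_zero rotR_add strang_symm
  subst this
  exact he

/-- The error of one Suzuki step. All matrices involved are bounded by `e²` on the disc of radius
`5 ^ (-q)`, and `e² + e ≤ 12`. -/
theorem suz_error (q : ℕ) (s : ℝ) (hs : 5 ^ q * |s| ≤ 1) :
    ‖suz strang q s - rotR s‖ ≤ 12 * (5 ^ q * |s|) ^ (2 * q + 3) := by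
  obtain ⟨e, he⟩ := suz_order rotR_diff rotR_zero rotR_add strang_symm strang_order q
  have h := he.norm_le (ρ := (5 ^ q)⁻¹) (M := 12) (s := s) (by positivity) ?_ ?_
  · refine h.trans_eq ?_
    rw [div_inv_eq_mul, Complex.norm_real, Real.norm_eq_abs, mul_comm |s|]
  · intro z hz
    have hz' : 5 ^ q * ‖z‖ ≤ 1 := by
      rwa [← le_div_iff₀' (by positivity), one_div]
    have hz1 : ‖z‖ ≤ 1 := hz.trans (inv_le_one_of_one_le₀ (one_le_pow₀ (by norm_num)))
    have h1 : ‖suz strang q z‖ ≤ Real.exp 2 := by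
      refine (suz_norm (by norm_num) strang_norm q z).trans (Real.exp_le_exp.2 ?_)
      nlinarith
    have h2 : ‖rotR z‖ ≤ Real.exp 1 :=
      (rotR_norm z).trans (Real.exp_le_exp.2 ((Complex.abs_im_le_norm z).trans hz1))
    have h3 : Real.exp 2 = Real.exp 1 * Real.exp 1 := by rw [← Real.exp_add]; norm_num
    have h4 := Real.exp_one_lt_d9
    have h5 := Real.exp_pos 1
    refine (norm_sub_le _ _).trans ?_
    nlinarith
  · rw [Complex.norm_real, Real.norm_eq_abs, ← one_div, le_div_iff₀' (by positivity)]
    exact hs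

/-! ### Gaussian packets with Hermite factors -/

open Polynomial in
/-- Two-parameter Hermite polynomials, `H_{n+1} = 2 β x H_n - 2 n κ H_{n-1}`. The physicists'
polynomials have `β = κ = 1`. The extra parameters make the family stable under the Fourier
transform of Gaussian packets, including the degenerate values. -/
def hermP {K : Type*} [CommRing K] (β κ : K) : ℕ → K[X]
  | 0 => 1
  | 1 => C (2 * β) * X
  | n + 2 => C (2 * β) * X * hermP β κ (n + 1) - C (2 * (n + 1) * κ) * hermP β κ n

section herm
open Polynomial

theorem hermP_succ {K : Type*} [CommRing K] (β κ : K) (n : ℕ) :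
    hermP β κ (n + 1) = C (2 * β) * X * hermP β κ n - C (2 * n * κ) * hermP β κ (n - 1) := by
  cases n with
  | zero => simp [hermP]
  | succ n => simp [hermP]

theorem hermP_derivative {K : Type*} [CommRing K] (β κ : K) (n : ℕ) :
    derivative (hermP β κ n) = C (2 * n * β) * hermP β κ (n - 1) := by
  induction n using Nat.strong_induction_on with
  | _ n ih =>
    match n with
    | 0 => simp [hermP]
    | 1 => simp [hermP]
    | n + 2 =>
      have h := hermP_succ β κ n
      simp only [hermP, derivative_sub, derivative_mul, derivative_C, derivative_X,
        ih (n + 1) (by omega), ih n (by omega), Nat.add_sub_cancel, show n + 2 - 1 = n + 1 by omega]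
      rw [h]
      push_cast
      simp only [map_mul, map_add, map_one, map_ofNat]
      ring

theorem hermP_scale (β κ μ x : ℂ) (n : ℕ) :
    (hermP (μ * β) (μ ^ 2 * κ) n).eval x = μ ^ n * (hermP β κ n).eval x := by
  induction n using Nat.strong_induction_on with
  | _ n ih =>
    match n with
    | 0 => simp [hermP]
    | 1 => simp [hermP]; ring
    | n + 2 =>
      simp only [hermP, eval_sub, eval_mul, eval_C, eval_X, ih (n + 1) (by omega),
        ih n (by omega)]
      ring

theorem hermP_dilate (β κ ν x : ℂ) (n : ℕ) :
    (hermP (ν * β) κ n).eval x = (hermP β κ n).eval (ν * x) := by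
  induction n using Nat.strong_induction_on with
  | _ n ih =>
    match n with
    | 0 => simp [hermP]
    | 1 => simp [hermP]; ring
    | n + 2 =>
      simp only [hermP, eval_sub, eval_mul, eval_C, eval_X, ih (n + 1) (by omega),
        ih n (by omega)]
      ring

theorem hermP_ofReal (x : ℝ) (n : ℕ) :
    (hermP (1 : ℂ) 1 n).eval (x : ℂ) = ((hermP (1 : ℝ) 1 n).eval x : ℝ) := by
  induction n using Nat.strong_induction_on with
  | _ n ih =>
    match n with
    | 0 => simp [hermP]
    | 1 => simp [hermP]
    | n + 2 =>
      simp only [hermP, eval_sub, eval_mul, eval_C, eval_X, ih (n + 1) (by omega),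
        ih n (by omega)]
      push_cast
      ring

theorem integrable_poly_gauss {b : ℝ} (hb : 0 < b) (P : ℝ[X]) :
    Integrable fun x : ℝ => P.eval x * Real.exp (-b * x ^ 2) := by
  induction P using Polynomial.induction_on' with
  | add p q hp hq => exact (hp.add hq).congr (Filter.Eventually.of_forall fun x => by simp [add_mul])
  | monomial k a =>
    have := (integrable_rpow_mul_exp_neg_mul_sq hb (s := k) (by
      have : (0 : ℝ) ≤ k := by positivity
      linarith)).const_mul a
    simpa [mul_assoc] using this

theorem integrable_poly_cgauss {α : ℂ} (hα : 0 < α.re) (P : ℂ[X]) :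
    Integrable fun x : ℝ => cexp (-α * x ^ 2 / 2) * P.eval (x : ℂ) := by
  induction P using Polynomial.induction_on' with
  | add p q hp hq => exact (hp.add hq).congr (Filter.Eventually.of_forall fun x => by simp [mul_add])
  | monomial k a =>
    have h := (integrable_poly_gauss (b := α.re / 2) (by positivity) (monomial k ‖a‖)).norm
    refine h.mono' (by fun_prop) (Filter.Eventually.of_forall fun x => ?_)
    simp only [eval_monomial, norm_mul, norm_pow, Complex.norm_exp, Complex.norm_real,
      Real.norm_eq_abs, Real.abs_exp, abs_norm]
    have : (-α * (x : ℂ) ^ 2 / 2).re = -(α.re / 2) * x ^ 2 := by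
      rw [show -α * (x : ℂ) ^ 2 / 2 = ((x ^ 2 / 2 : ℝ) : ℂ) * (-α) by push_cast; ring,
        Complex.re_ofReal_mul]
      simp; ring
    rw [this, mul_comm]

theorem integrable_poly_cgauss_exp {α : ℂ} (hα : 0 < α.re) (P : ℂ[X]) (ξ : ℝ) :
    Integrable fun x : ℝ => cexp (-α * x ^ 2 / 2) * P.eval (x : ℂ) * cexp (-I * ξ * x) := by
  refine (integrable_poly_cgauss hα P).norm.mono' (by fun_prop)
    (Filter.Eventually.of_forall fun x => ?_)
  rw [norm_mul]
  have : ‖cexp (-I * ξ * x)‖ = 1 := by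
    rw [show -I * ξ * x = ((-(ξ * x) : ℝ) : ℂ) * I by push_cast; ring]
    exact Complex.norm_exp_ofReal_mul_I _
  rw [this, mul_one]

/-- The unnormalised Fourier transform of `exp (-α x² / 2) P(x)` at `ξ`. -/
def gaussMom (α : ℂ) (ξ : ℝ) (P : ℂ[X]) : ℂ :=
  ∫ x : ℝ, cexp (-α * x ^ 2 / 2) * P.eval (x : ℂ) * cexp (-I * ξ * x)

theorem gaussMom_add {α : ℂ} (hα : 0 < α.re) (ξ : ℝ) (P Q : ℂ[X]) :
    gaussMom α ξ (P + Q) = gaussMom α ξ P + gaussMom α ξ Q := by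
  unfold gaussMom
  rw [← integral_add (integrable_poly_cgauss_exp hα P ξ) (integrable_poly_cgauss_exp hα Q ξ)]
  congr 1; funext x; simp; ring

theorem gaussMom_C_mul (α : ℂ) (ξ : ℝ) (c : ℂ) (P : ℂ[X]) :
    gaussMom α ξ (C c * P) = c * gaussMom α ξ P := by
  unfold gaussMom
  rw [← integral_const_mul]
  congr 1; funext x; simp; ring

/-- Integration by parts: the integral of the derivative of the integrand vanishes. -/
theorem gaussMom_parts {α : ℂ} (hα : 0 < α.re) (ξ : ℝ) (P : ℂ[X]) :
    gaussMom α ξ (derivative P + C (-α) * (X * P) + C (-I * ξ) * P) = 0 := by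
  unfold gaussMom
  refine integral_eq_zero_of_hasDerivAt_of_integrable
    (f := fun x : ℝ => cexp (-α * x ^ 2 / 2) * P.eval (x : ℂ) * cexp (-I * ξ * x)) (fun x => ?_)
    (integrable_poly_cgauss_exp hα _ ξ) (integrable_poly_cgauss_exp hα _ ξ)
  have h1 : HasDerivAt (fun z : ℂ => cexp (-α * z ^ 2 / 2))
      (cexp (-α * x ^ 2 / 2) * (-α * x)) (x : ℂ) := by
    refine ((((hasDerivAt_id (x : ℂ)).pow 2).const_mul (-α)).div_const 2).cexp.congr_deriv ?_
    simp; ring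
  have h2 : HasDerivAt (fun z : ℂ => cexp (-I * ξ * z)) (cexp (-I * ξ * x) * (-I * ξ)) (x : ℂ) := by
    simpa using ((hasDerivAt_id (x : ℂ)).const_mul (-I * ξ)).cexp
  refine (((h1.mul (P.hasDerivAt (x : ℂ))).mul h2).comp_ofReal).congr_deriv ?_
  simp
  ring

/-- The Fourier transform maps a Gaussian times a Hermite polynomial to one of the same shape: both
sides satisfy the same three-term recurrence. -/
theorem gaussMom_hermP {α : ℂ} (hα : 0 < α.re) (ξ : ℝ) (β κ : ℂ) (n : ℕ) :
    gaussMom α ξ (hermP β κ n) =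
      gaussMom α ξ 1 * (hermP (-I * β / α) (κ - 2 * β ^ 2 / α) n).eval (ξ : ℂ) := by
  have hα0 : α ≠ 0 := by rintro rfl; simp at hα
  have step : ∀ n : ℕ, gaussMom α ξ (hermP β κ (n + 1)) =
      2 * (-I * β / α) * ξ * gaussMom α ξ (hermP β κ n) -
        2 * n * (κ - 2 * β ^ 2 / α) * gaussMom α ξ (hermP β κ (n - 1)) := by
    intro n
    have h := gaussMom_parts hα ξ (C (2 * β) * hermP β κ n)
    have e : derivative (C (2 * β) * hermP β κ n) + C (-α) * (X * (C (2 * β) * hermP β κ n)) +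
        C (-I * ξ) * (C (2 * β) * hermP β κ n) =
        C (-α) * hermP β κ (n + 1) + (C (4 * n * β ^ 2 - 2 * n * κ * α) * hermP β κ (n - 1) +
          C (-I * ξ * (2 * β)) * hermP β κ n) := by
      rw [derivative_C_mul, hermP_derivative, hermP_succ]
      simp only [map_mul, map_sub, map_neg, map_pow, map_ofNat]
      ring
    rw [e, gaussMom_add hα, gaussMom_add hα, gaussMom_C_mul, gaussMom_C_mul, gaussMom_C_mul] at h
    field_simp
    linear_combination -h
  induction n using Nat.strong_induction_on with
  | _ n ih =>
    match n with
    | 0 => simp [hermP]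
    | n + 1 =>
      rw [step, ih n (by omega), ih (n - 1) (by omega), hermP_succ]
      simp only [eval_sub, eval_mul, eval_C, eval_X]
      ring

/-- The Fourier transform of a complex Gaussian, with the principal square root of `α`. -/
theorem gaussMom_one {α : ℂ} (hα : 0 < α.re) (ξ : ℝ) :
    (((2 * Real.pi) ^ (-(1 : ℝ) / 2) : ℝ) : ℂ) * gaussMom α ξ 1 =
      α ^ (-(1 / 2) : ℂ) * cexp (-(1 / α) * ξ ^ 2 / 2) := by
  have hα0 : α ≠ 0 := by rintro rfl; simp at hα
  have hb : 0 < (α / 2).re := by simpa using hα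
  have h := fourierIntegral_gaussian hb (-ξ : ℂ)
  have h1 : gaussMom α ξ 1 = ∫ x : ℝ, cexp (I * (-ξ) * x) * cexp (-(α / 2) * x ^ 2) := by
    unfold gaussMom
    congr 1; funext x
    rw [eval_one, mul_one, mul_comm]
    congr 2 <;> ring
  rw [h1, h]
  have h2 : ((Real.pi : ℂ) / (α / 2)) ^ (1 / 2 : ℂ) =
      ((2 * Real.pi : ℝ) : ℂ) ^ (1 / 2 : ℂ) * α ^ (-(1 / 2) : ℂ) := by
    have harg : α.arg ≠ Real.pi := by
      rw [Ne, Complex.arg_eq_pi_iff]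
      rintro ⟨h, -⟩
      exact absurd hα (not_lt.2 h.le)
    have hp : ((2 * Real.pi : ℝ) : ℂ) ≠ 0 := Complex.ofReal_ne_zero.2 (by positivity)
    rw [show (Real.pi : ℂ) / (α / 2) = ((2 * Real.pi : ℝ) : ℂ) * α⁻¹ by
      push_cast; field_simp, Complex.cpow_def_of_ne_zero (mul_ne_zero hp (inv_ne_zero hα0)),
      Complex.cpow_def_of_ne_zero hp, Complex.cpow_def_of_ne_zero hα0,
      Complex.log_ofReal_mul (by positivity) (inv_ne_zero hα0), Complex.log_inv _ harg,
      ← Complex.ofReal_log (by positivity), ← Complex.exp_add]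
    congr 1
    ring
  rw [h2, ← mul_assoc, ← mul_assoc]
  have h3 : (((2 * Real.pi) ^ (-(1 : ℝ) / 2) : ℝ) : ℂ) * ((2 * Real.pi : ℝ) : ℂ) ^ (1 / 2 : ℂ) = 1 := by
    have : ((2 * Real.pi : ℝ) : ℂ) ^ (1 / 2 : ℂ) = (((2 * Real.pi) ^ ((1 : ℝ) / 2) : ℝ) : ℂ) := by
      rw [Complex.ofReal_cpow (by positivity)]; norm_num
    rw [this, ← Complex.ofReal_mul, ← Real.rpow_add (by positivity)]
    norm_num
  rw [h3, one_mul]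
  congr 2
  field_simp
  ring

end herm

/-- The packet `c exp (-α x² / 2) H_n(x)`, with `H_n` the Hermite polynomial of parameters `β, κ`. -/
def gaussHerm (n : ℕ) (c α β κ : ℂ) : ℝ → ℂ := fun x =>
  c * (cexp (-α * x ^ 2 / 2) * (hermP β κ n).eval (x : ℂ))

theorem fourierT_gaussHerm {α : ℂ} (hα : 0 < α.re) (n : ℕ) (c β κ : ℂ) :
    fourierT (gaussHerm n c α β κ) =
      gaussHerm n (c * α ^ (-(1 / 2) : ℂ)) (1 / α) (-I * β / α) (κ - 2 * β ^ 2 / α) := by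
  funext ξ
  have h1 : ∫ x : ℝ, gaussHerm n c α β κ x * cexp (-I * ξ * x) =
      c * gaussMom α ξ (hermP β κ n) := by
    unfold gaussMom
    rw [← integral_const_mul]
    congr 1; funext x; simp only [gaussHerm]; ring
  rw [fourierT, h1, gaussMom_hermP hα, gaussHerm]
  linear_combination c * (hermP (-I * β / α) (κ - 2 * β ^ 2 / α) n).eval (ξ : ℂ) * gaussMom_one hα ξ

theorem fourierTInv_gaussHerm {α : ℂ} (hα : 0 < α.re) (n : ℕ) (c β κ : ℂ) :
    fourierTInv (gaussHerm n c α β κ) =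
      gaussHerm n (c * α ^ (-(1 / 2) : ℂ)) (1 / α) (I * β / α) (κ - 2 * β ^ 2 / α) := by
  funext x
  have h : fourierTInv (gaussHerm n c α β κ) x = fourierT (gaussHerm n c α β κ) (-x) := by
    simp only [fourierTInv, fourierT]
    congr 2
    funext ξ
    congr 2
    push_cast
    ring
  rw [h, fourierT_gaussHerm hα, gaussHerm, gaussHerm]
  have := hermP_dilate (I * β / α) (κ - 2 * β ^ 2 / α) (-1) x n
  rw [show -1 * (I * β / α) = -I * β / α by ring] at this
  have h2 := hermP_dilate (-I * β / α) (κ - 2 * β ^ 2 / α) (-1) x n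
  rw [show -1 * (-I * β / α) = I * β / α by ring] at h2
  rw [h2]
  simp

theorem Mop_gaussHerm (a : ℝ) (n : ℕ) (c α β κ : ℂ) :
    Mop a (gaussHerm n c α β κ) = gaussHerm n c (α + 2 * I * a) β κ := by
  funext x
  simp only [Mop, gaussHerm]
  rw [show -(α + 2 * I * a) * (x : ℂ) ^ 2 / 2 = -I * a * x ^ 2 + -α * x ^ 2 / 2 by ring,
    Complex.exp_add]
  ring

theorem Pop_gaussHerm (b : ℝ) {α : ℂ} (hα : 0 < α.re) (n : ℕ) (c β κ : ℂ) :
    Pop b (gaussHerm n c α β κ) = gaussHerm n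
      (c * (α ^ (-(1 / 2) : ℂ) * (1 / α + 2 * I * b) ^ (-(1 / 2) : ℂ)))
      (α / (1 + 2 * I * b * α)) (β / (1 + 2 * I * b * α))
      (κ - 4 * I * b * β ^ 2 / (1 + 2 * I * b * α)) := by
  have hα0 : α ≠ 0 := by rintro rfl; simp at hα
  have hre : 0 < (1 / α + 2 * I * b).re := by
    have : 0 < (α⁻¹).re := by
      rw [Complex.inv_re]; exact div_pos hα (Complex.normSq_pos.2 hα0)
    simpa using this
  have hne : 1 / α + 2 * I * b ≠ 0 := by
    intro h; rw [h] at hre; simp at hre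
  have hne' : 1 + 2 * I * b * α ≠ 0 := by
    intro h; apply hne; field_simp; linear_combination h
  have : Pop b (gaussHerm n c α β κ) =
      fourierTInv (Mop b (fourierT (gaussHerm n c α β κ))) := rfl
  rw [this, fourierT_gaussHerm hα, Mop_gaussHerm, fourierTInv_gaussHerm hre]
  have e : 1 / α + 2 * I * b = (1 + 2 * I * b * α) / α := by field_simp
  congr 1
  · ring
  · rw [e]; field_simp
  · rw [e, show I * (-I * β / α) = β / α by linear_combination (-β / α) * I_sq]
    field_simp
  · rw [e, show (-I * β / α) ^ 2 = -(β ^ 2 / α ^ 2) by linear_combination (β ^ 2 / α ^ 2) * I_sq]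
    have hb : I * b = ((1 + 2 * I * b * α) - 1) / (2 * α) := by field_simp; ring
    generalize 1 + 2 * I * b * α = D at *
    rw [show 4 * I * (b : ℂ) = 4 * (I * b) by ring, hb]
    field_simp
    ring

/-! ### Packets attached to a vector of `ℂ × ℂ` -/

/-- The normalisation constant of `ψ_n`. -/
def hermNorm (n : ℕ) : ℝ := 1 / Real.sqrt (2 ^ n * n.factorial * Real.sqrt Real.pi)

open ComplexConjugate in
/-- The image of `ψ_n` under the metaplectic element with vector `v = (y, z)`; the scalar `w` plays
the role of `(y + z) ^ (-1/2)` and carries the choice of the branch. -/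
def packet (n : ℕ) (w : ℂ) (v : ℂ × ℂ) : ℝ → ℂ :=
  gaussHerm n (hermNorm n * w) ((v.1 - v.2) / (v.1 + v.2)) (1 / (v.1 + v.2))
    (conj (v.1 + v.2) / (v.1 + v.2))

open ComplexConjugate in
/-- The pair `(w, v)` is within `d` of the exact evolution `(e^{-iτ/2}, (e^{iτ}, 0))`. The sign of the
square root `w` is pinned down by `hre`. -/
structure Good (τ d : ℝ) (w : ℂ) (v : ℂ × ℂ) : Prop where
  /-- `w` is a square root of `1 / (y + z)`. -/
  hw : w ^ 2 * (v.1 + v.2) = 1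
  /-- `v` lies on the orbit of `(1, 0)` under `SU(1, 1)`. -/
  hdet : v.1 * conj v.1 - v.2 * conj v.2 = 1
  h1 : ‖v.1 - cexp (I * τ)‖ ≤ d
  h2 : ‖v.2‖ ≤ d
  /-- `w` is on the same side as `e^{-iτ/2}`. -/
  hre : 0 < (w * cexp (I * τ / 2)).re

theorem norm_exp_I (τ : ℝ) : ‖cexp (I * τ)‖ = 1 := by
  rw [mul_comm]; exact Complex.norm_exp_ofReal_mul_I τ

theorem norm_exp_I_half (τ : ℝ) : ‖cexp (I * τ / 2)‖ = 1 := by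
  have := norm_exp_I (τ / 2)
  push_cast at this
  rwa [← mul_div_assoc] at this

theorem norm_sub_one_le {u : ℂ} (hu : 0 ≤ u.re) : ‖u - 1‖ ≤ ‖u ^ 2 - 1‖ := by
  have h1 : 1 ≤ ‖u + 1‖ := by
    refine le_trans ?_ (Complex.re_le_norm _)
    simpa using hu
  rw [show u ^ 2 - 1 = (u - 1) * (u + 1) by ring, norm_mul]
  exact le_mul_of_one_le_right (norm_nonneg _) h1

/-- Two principal inverse square roots of numbers in the right half plane have arguments in
`(-π/4, π/4)`, so their product stays in the right half plane. -/
theorem sqrt_prod_re_pos {a b : ℂ} (ha : 0 < a.re) (hb : 0 < b.re) :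
    0 < (a ^ (-(1 / 2) : ℂ) * b ^ (-(1 / 2) : ℂ)).re := by
  have ha0 : a ≠ 0 := by rintro rfl; simp at ha
  have hb0 : b ≠ 0 := by rintro rfl; simp at hb
  rw [Complex.cpow_def_of_ne_zero ha0, Complex.cpow_def_of_ne_zero hb0, ← Complex.exp_add,
    Complex.exp_re]
  have h1 := abs_lt.1 (Complex.abs_arg_lt_pi_div_two_iff.2 (Or.inl ha))
  have h2 := abs_lt.1 (Complex.abs_arg_lt_pi_div_two_iff.2 (Or.inl hb))
  refine mul_pos (Real.exp_pos _) (Real.cos_pos_of_mem_Ioo ?_)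
  have : (Complex.log a * -(1 / 2) + Complex.log b * -(1 / 2)).im = -(a.arg + b.arg) / 2 := by
    rw [show Complex.log a * -(1 / 2) + Complex.log b * -(1 / 2) =
      ((-(1 / 2) : ℝ) : ℂ) * (Complex.log a + Complex.log b) by push_cast; ring,
      Complex.im_ofReal_mul, Complex.add_im, Complex.log_im, Complex.log_im]
    ring
  rw [this]
  constructor <;> linarith [h1.1, h1.2, h2.1, h2.2]

theorem cpow_neg_half_sq (a : ℂ) : (a ^ (-(1 / 2) : ℂ)) ^ 2 = a⁻¹ := by
  rw [← Complex.cpow_nat_mul]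
  norm_num
  rw [Complex.cpow_neg_one]

namespace Good
open ComplexConjugate
variable {τ d : ℝ} {w : ℂ} {v : ℂ × ℂ}

theorem mono (h : Good τ d w v) {d' : ℝ} (hd : d ≤ d') : Good τ d' w v :=
  ⟨h.hw, h.hdet, h.h1.trans hd, h.h2.trans hd, h.hre⟩

theorem ne_zero (h : Good τ d w v) : v.1 + v.2 ≠ 0 := by
  intro h0; have := h.hw; rw [h0] at this; simp at this

theorem re_pos (h : Good τ d w v) : 0 < ((v.1 - v.2) / (v.1 + v.2)).re := by
  have hN := Complex.normSq_pos.2 h.ne_zero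
  have hdet := congrArg Complex.re h.hdet
  simp at hdet
  rw [Complex.div_re, ← add_div]
  refine div_pos ?_ hN
  simp
  linarith

theorem norm_fst (h : Good τ d w v) : ‖v.1‖ ≤ 1 + d := by
  have := norm_le_norm_add_norm_sub' v.1 (cexp (I * τ))
  rw [norm_exp_I] at this
  linarith [h.h1]

theorem norm_Q_sub (h : Good τ d w v) : ‖v.1 + v.2 - cexp (I * τ)‖ ≤ 2 * d := by
  rw [add_sub_right_comm]
  exact (norm_add_le _ _).trans (by linarith [h.h1, h.h2])

theorem norm_Q (h : Good τ d w v) : 1 - 2 * d ≤ ‖v.1 + v.2‖ := by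
  have := norm_le_norm_add_norm_sub (v.1 + v.2) (cexp (I * τ))
  rw [norm_exp_I] at this
  linarith [h.norm_Q_sub]

/-- Since the branch is fixed by `hre`, closeness of `w² = 1/Q` to `e^{-iτ}` gives closeness of `w`
to `e^{-iτ/2}`. -/
theorem norm_u_sub (h : Good τ d w v) (hd : d ≤ 1 / 8) :
    ‖w * cexp (I * τ / 2) - 1‖ ≤ 3 * d := by
  have hQ := h.norm_Q
  have hd0 : 0 ≤ d := (norm_nonneg _).trans h.h2
  refine (norm_sub_one_le h.hre.le).trans ?_
  have e : (w * cexp (I * τ / 2)) ^ 2 - 1 = -(v.1 + v.2 - cexp (I * τ)) / (v.1 + v.2) := by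
    rw [eq_div_iff h.ne_zero, mul_pow, ← Complex.exp_nat_mul]
    rw [show ((2 : ℕ) : ℂ) * (I * τ / 2) = I * τ by push_cast; ring]
    linear_combination cexp (I * τ) * h.hw
  rw [e, norm_div, norm_neg, div_le_iff₀ (by linarith)]
  nlinarith [h.norm_Q_sub]

theorem shearM (h : Good τ d w v) (hd : d ≤ 1 / 8) (a : ℝ) :
    Good τ (d + 2 * |a|) w ((1 + (I * a) • nilM) v) := by
  have hQ : ‖I * a * (v.1 + v.2)‖ ≤ 2 * |a| := by
    rw [norm_mul, norm_mul, Complex.norm_I, one_mul, Complex.norm_real, Real.norm_eq_abs, mul_comm]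
    have := norm_add_le v.1 v.2
    have h3 := h.norm_fst
    have h4 := h.h2
    gcongr
    linarith
  rw [shearM_apply]
  refine ⟨?_, ?_, ?_, ?_, h.hre⟩
  · simp only; rw [← h.hw]; ring
  · simp only [map_add, map_sub, map_mul, Complex.conj_I, Complex.conj_ofReal]
    rw [← h.hdet]; ring
  · simp only
    rw [add_sub_right_comm]
    exact (norm_add_le _ _).trans (by linarith [h.h1])
  · exact (norm_sub_le _ _).trans (by linarith [h.h2])

/-- The scalar picked up from the two Fourier transforms is again the correct branch of the square
root: its factor `f` satisfies `f² = Q / Q'` and lies in the right half plane. -/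
theorem shearP (h : Good τ d w v) (b : ℝ) (hd : d + 2 * |b| ≤ 1 / 8) :
    Good τ (d + 2 * |b|) (w * (((v.1 - v.2) / (v.1 + v.2)) ^ (-(1 / 2) : ℂ) *
      (1 / ((v.1 - v.2) / (v.1 + v.2)) + 2 * I * b) ^ (-(1 / 2) : ℂ)))
      ((1 + (I * b) • nilP) v) := by
  have hb0 := abs_nonneg b
  have hd0 : 0 ≤ d := (norm_nonneg _).trans h.h2
  have hD : ‖v.1 - v.2‖ ≤ 5 / 4 := by
    have := norm_sub_le v.1 v.2
    linarith [h.norm_fst, h.h2]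
  have hP : ‖I * b * (v.1 - v.2)‖ ≤ 5 / 4 * |b| := by
    rw [norm_mul, norm_mul, Complex.norm_I, one_mul, Complex.norm_real, Real.norm_eq_abs, mul_comm]
    gcongr
  have hα := h.re_pos
  set α := (v.1 - v.2) / (v.1 + v.2) with hαdef
  have hα0 : α ≠ 0 := by intro h0; rw [h0] at hα; simp at hα
  have hQ0 := h.ne_zero
  have hD0 : v.1 - v.2 ≠ 0 := by
    intro h0; apply hα0; rw [hαdef, h0, zero_div]
  have hre : 0 < (1 / α + 2 * I * b).re := by
    have : 0 < (α⁻¹).re := by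
      rw [Complex.inv_re]; exact div_pos hα (Complex.normSq_pos.2 hα0)
    simpa using this
  have hne : 1 / α + 2 * I * b ≠ 0 := by
    intro h; rw [h] at hre; simp at hre
  have hf := sqrt_prod_re_pos hα hre
  have hfsq : (α ^ (-(1 / 2) : ℂ) * (1 / α + 2 * I * b) ^ (-(1 / 2) : ℂ)) ^ 2 *
      (v.1 + v.2 + 2 * (I * b * (v.1 - v.2))) = v.1 + v.2 := by
    rw [mul_pow, cpow_neg_half_sq, cpow_neg_half_sq]
    have : v.1 + v.2 + 2 * (I * b * (v.1 - v.2)) = (v.1 - v.2) * (1 / α + 2 * I * b) := by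
      rw [hαdef]; field_simp
    rw [this]
    have hα' : α⁻¹ * (v.1 - v.2) = v.1 + v.2 := by rw [hαdef]; field_simp
    generalize 1 / α + 2 * I * b = g at hne ⊢
    rw [← hα']
    field_simp
  set f := α ^ (-(1 / 2) : ℂ) * (1 / α + 2 * I * b) ^ (-(1 / 2) : ℂ)
  have hQ' : 3 / 4 - 5 / 2 * |b| ≤ ‖v.1 + v.2 + 2 * (I * b * (v.1 - v.2))‖ := by
    have h3 := norm_sub_le_norm_add (v.1 + v.2) (2 * (I * b * (v.1 - v.2)))
    have h4 : ‖2 * (I * b * (v.1 - v.2))‖ ≤ 5 / 2 * |b| := by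
      rw [norm_mul, Complex.norm_ofNat]; linarith
    linarith [h.norm_Q]
  have hQ'0 : v.1 + v.2 + 2 * (I * b * (v.1 - v.2)) ≠ 0 := by
    intro h0; rw [h0, norm_zero] at hQ'; linarith
  have hf1 : ‖f - 1‖ ≤ 1 / 3 := by
    refine (norm_sub_one_le hf.le).trans ?_
    have e : f ^ 2 - 1 = -(2 * (I * b * (v.1 - v.2))) /
        (v.1 + v.2 + 2 * (I * b * (v.1 - v.2))) := by
      rw [eq_div_iff hQ'0]; linear_combination hfsq
    rw [e, norm_div, norm_neg, div_le_iff₀ (by linarith), norm_mul, Complex.norm_ofNat]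
    linarith
  have hu := h.norm_u_sub (by linarith)
  rw [shearP_apply]
  refine ⟨?_, ?_, ?_, ?_, ?_⟩
  · simp only
    rw [← h.hw]
    linear_combination w ^ 2 * hfsq
  · simp only [map_add, map_sub, map_mul, Complex.conj_I, Complex.conj_ofReal]
    rw [← h.hdet]; ring
  · simp only
    rw [add_sub_right_comm]
    exact (norm_add_le _ _).trans (by linarith [h.h1])
  · exact (norm_add_le _ _).trans (by linarith [h.h2])
  · set u := w * cexp (I * τ / 2)
    have h5 : ‖w * f * cexp (I * τ / 2) - 1‖ < 1 := by
      have e : w * f * cexp (I * τ / 2) - 1 = (u - 1) + (u - 1) * (f - 1) + (f - 1) := by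
        simp only [u]; ring
      rw [e]
      calc _ ≤ ‖u - 1‖ + ‖(u - 1) * (f - 1)‖ + ‖f - 1‖ := norm_add₃_le
        _ = ‖u - 1‖ + ‖u - 1‖ * ‖f - 1‖ + ‖f - 1‖ := by rw [norm_mul]
        _ < 1 := by nlinarith [norm_nonneg (u - 1), norm_nonneg (f - 1)]
    have h6 := (Complex.abs_re_le_norm _).trans_lt h5
    rw [Complex.sub_re, Complex.one_re] at h6
    linarith [(abs_lt.1 h6).1]

/-- The branch condition is insensitive to a small change of the reference time. -/
theorem shift (h : Good τ d w v) (hd : d ≤ 1 / 8) {s : ℝ} (hs : |s| ≤ 1 / 8) :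
    0 < (w * cexp (I * (τ + s : ℝ) / 2)).re := by
  have hu := h.norm_u_sub hd
  have hd0 : 0 ≤ d := (norm_nonneg _).trans h.h2
  set u := w * cexp (I * τ / 2)
  have e : w * cexp (I * (τ + s : ℝ) / 2) = u * cexp (I * (s / 2 : ℝ)) := by
    simp only [u]
    rw [mul_assoc, ← Complex.exp_add]
    congr 2; push_cast; ring
  have h1 : ‖cexp (I * (s / 2 : ℝ)) - 1‖ ≤ |s| / 2 := by
    refine (Real.norm_exp_I_mul_ofReal_sub_one_le).trans_eq ?_
    rw [Real.norm_eq_abs, abs_div]; norm_num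
  set f := cexp (I * (s / 2 : ℝ))
  have h5 : ‖u * f - 1‖ < 1 := by
    rw [show u * f - 1 = (u - 1) + (u - 1) * (f - 1) + (f - 1) by ring]
    calc _ ≤ ‖u - 1‖ + ‖(u - 1) * (f - 1)‖ + ‖f - 1‖ := norm_add₃_le
      _ = ‖u - 1‖ + ‖u - 1‖ * ‖f - 1‖ + ‖f - 1‖ := by rw [norm_mul]
      _ < 1 := by nlinarith [norm_nonneg (u - 1), norm_nonneg (f - 1)]
  have h6 := (Complex.abs_re_le_norm _).trans_lt h5
  rw [Complex.sub_re, Complex.one_re] at h6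
  rw [e]
  linarith [(abs_lt.1 h6).1]

end Good

open ComplexConjugate in
/-- `M(a)` acts on packets by a shear of the vector. -/
theorem Mop_packet {τ d : ℝ} {w : ℂ} {v : ℂ × ℂ} (h : Good τ d w v) (n : ℕ) (a : ℝ) :
    Mop a (packet n w v) = packet n w ((1 + (I * a) • nilM) v) := by
  have hQ := h.ne_zero
  rw [packet, Mop_gaussHerm, shearM_apply, packet]
  have e : v.1 + I * a * (v.1 + v.2) + (v.2 - I * a * (v.1 + v.2)) = v.1 + v.2 := by ring
  simp only [e]
  congr 1
  field_simp
  ring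

open ComplexConjugate in
/-- `P(b)` acts on packets by a shear of the vector and a change of the square root. -/
theorem Pop_packet {τ d : ℝ} {w : ℂ} {v : ℂ × ℂ} (h : Good τ d w v) (n : ℕ) (b : ℝ)
    (hd : d + 2 * |b| ≤ 1 / 8) :
    Pop b (packet n w v) = packet n (w * (((v.1 - v.2) / (v.1 + v.2)) ^ (-(1 / 2) : ℂ) *
      (1 / ((v.1 - v.2) / (v.1 + v.2)) + 2 * I * b) ^ (-(1 / 2) : ℂ)))
      ((1 + (I * b) • nilP) v) := by
  have hQ := h.ne_zero
  have hQ' := (h.shearP b hd).ne_zero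
  rw [shearP_apply] at hQ'
  rw [packet, Pop_gaussHerm b h.re_pos, shearP_apply, packet]
  simp only at hQ' ⊢
  have hdet := h.hdet
  have e : 1 + 2 * I * b * ((v.1 - v.2) / (v.1 + v.2)) =
    (v.1 + I * b * (v.1 - v.2) + (v.2 + I * b * (v.1 - v.2))) / (v.1 + v.2) := by
    field_simp; ring
  rw [e]
  congr 1
  · ring
  · rw [div_div_div_cancel_right₀ hQ]
    ring
  · field_simp
  · simp only [map_add, map_sub, map_mul, Complex.conj_I, Complex.conj_ofReal]
    rw [eq_div_iff hQ']
    field_simp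
    linear_combination (4 * I * b) * hdet

/-- One Trotter–Suzuki step acts on packets through the matrix `suz strang q s`. The bound `d` grows by
the total length of the substeps; this crude bound only serves to keep track of the branch of
`w`. -/
theorem Uapprox_packet (n q : ℕ) {τ d s : ℝ} {w : ℂ} {v : ℂ × ℂ} (h : Good τ d w v)
    (hd : d + 2 * (5 ^ q * |s|) ≤ 1 / 8) :
    ∃ w', Uapprox (q + 1) s (packet n w v) = packet n w' (suz strang q s v) ∧
      Good τ (d + 2 * (5 ^ q * |s|)) w' (suz strang q s v) := by
  induction q generalizing τ d s w v with
  | zero =>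
    simp only [pow_zero, one_mul] at hd
    have hs := abs_nonneg s
    have a4 : |s / 4| = |s| / 4 := by rw [abs_div]; norm_num
    have a2 : |s / 2| = |s| / 2 := by rw [abs_div]; norm_num
    have g1 := h.shearM (by linarith) (s / 4)
    obtain ⟨w2, ep, g2⟩ : ∃ w2,
        Pop (s / 2) (packet n w ((1 + (I * (s / 4 : ℝ)) • nilM) v)) =
          packet n w2 ((1 + (I * (s / 2 : ℝ)) • nilP) ((1 + (I * (s / 4 : ℝ)) • nilM) v)) ∧
        Good τ (d + 2 * |s / 4| + 2 * |s / 2|) w2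
          ((1 + (I * (s / 2 : ℝ)) • nilP) ((1 + (I * (s / 4 : ℝ)) • nilM) v)) :=
      ⟨_, Pop_packet g1 n (s / 2) (by rw [a4, a2]; linarith),
        g1.shearP (s / 2) (by rw [a4, a2]; linarith)⟩
    have g3 := g2.shearM (by rw [a4, a2]; linarith) (s / 4)
    have ev : suz strang 0 s v = (1 + (I * (s / 4 : ℝ)) • nilM) ((1 + (I * (s / 2 : ℝ)) • nilP)
        ((1 + (I * (s / 4 : ℝ)) • nilM) v)) := by
      simp only [suz, strang, mul_apply_eq_comp]
      push_cast
      simp only [mul_div_assoc]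
    refine ⟨w2, ?_, ?_⟩
    · rw [zero_add, Uapprox, Mop_packet h, ep, Mop_packet g2, ev]
    · rw [ev]
      exact g3.mono (by rw [a4, a2]; linarith)
  | succ q ih =>
    obtain ⟨b1, b2⟩ := suzQ_bounds q
    set D := 2 * (5 ^ q * |s|) with hD
    have hD0 : 0 ≤ D := by positivity
    have e5 : 2 * (5 ^ (q + 1) * |s|) = 5 * D := by rw [hD]; ring
    rw [e5] at hd ⊢
    have key : ∀ {d : ℝ} {w : ℂ} {v : ℂ × ℂ} (a : ℝ), |a| ≤ 1 → Good τ d w v → d + D ≤ 1 / 8 →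
        ∃ w', Uapprox (q + 1) (a * s) (packet n w v) = packet n w' (suz strang q (a * s) v) ∧
          Good τ (d + D) w' (suz strang q (a * s) v) := by
      intro d w v a ha g hg
      have hle : 2 * (5 ^ q * |a * s|) ≤ D := by
        rw [hD, abs_mul]
        have : |a| * |s| ≤ 1 * |s| := by gcongr
        rw [one_mul] at this
        gcongr
      obtain ⟨w', e, g'⟩ := ih (s := a * s) g (by linarith)
      refine ⟨w', ?_, ?_⟩
      · rw [e]; push_cast; rfl
      · push_cast at g'
        exact g'.mono (by linarith)
    obtain ⟨w1, e1, g1⟩ := key _ b1 h (by linarith)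
    obtain ⟨w2, e2, g2⟩ := key _ b1 g1 (by linarith)
    obtain ⟨w3, e3, g3⟩ := key _ b2 g2 (by linarith)
    obtain ⟨w4, e4, g4⟩ := key _ b1 g3 (by linarith)
    obtain ⟨w5, e5, g5⟩ := key _ b1 g4 (by linarith)
    refine ⟨w5, ?_, ?_⟩
    · have hsp : s / (4 - (4 : ℝ) ^ ((1 : ℝ) / (2 * ((q : ℝ) + 1) + 1))) = suzQ q * s := by
        rw [suzQ]; ring
      have hsp' : s - 4 * (suzQ q * s) = (1 - 4 * suzQ q) * s := by ring
      rw [Uapprox]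
      simp only [hsp, hsp', e1, e2, e3, e4, e5]
      rfl
    · exact g5.mono (by linarith)

/-- After `j` steps the vector is within `2 j δ` of the exact one, where `δ` bounds the matrix error of
one step. -/
theorem iterate_packet (n q : ℕ) {s δ : ℝ} (hs : 5 ^ q * |s| ≤ 1 / 32)
    (hδ : 12 * (5 ^ q * |s|) ^ (2 * q + 3) ≤ δ) (j : ℕ) (hj : 2 * j * δ ≤ 1 / 16) :
    ∃ w v, (Uapprox (q + 1) s)^[j] (packet n 1 (1, 0)) = packet n w v ∧
      Good (j * s) (2 * j * δ) w v := by
  have hδ0 : 0 ≤ δ := le_trans (by positivity) hδ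
  induction j with
  | zero => exact ⟨1, (1, 0), rfl, by constructor <;> simp⟩
  | succ j ih =>
    push_cast at hj
    obtain ⟨w, v, e, g⟩ := ih (by linarith)
    obtain ⟨w', e', g'⟩ := Uapprox_packet n q g (s := s) (by linarith)
    have hs1 : |s| ≤ 1 / 8 := by
      have : |s| ≤ 5 ^ q * |s| := le_mul_of_one_le_left (abs_nonneg _) (one_le_pow₀ (by norm_num))
      linarith
    refine ⟨w', suz strang q s v, ?_, ?_⟩
    · rw [Function.iterate_succ_apply', e, e']
    have hfine : ‖suz strang q s v - (cexp (I * (j * s + s : ℝ)), 0)‖ ≤ 2 * j * δ + 2 * δ := by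
      have hv : ‖v - (cexp (I * (j * s : ℝ)), 0)‖ ≤ 2 * j * δ := by
        rw [Prod.norm_def]; simp only [Prod.fst_sub, Prod.snd_sub, sub_zero]
        exact max_le g.h1 g.h2
      have hv' : ‖v‖ ≤ 2 := by
        rw [Prod.norm_def]
        exact max_le (by linarith [g.norm_fst]) (by linarith [g.h2])
      have hR : ‖rotR s‖ ≤ 1 := by simpa using rotR_norm s
      have hS := (suz_error q s (by linarith)).trans hδ
      have e2 : suz strang q s v - (cexp (I * (j * s + s : ℝ)), 0) =
          (suz strang q s - rotR s) v + rotR s (v - (cexp (I * (j * s : ℝ)), 0)) := by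
        have hRv : rotR s (cexp (I * (j * s : ℝ)), 0) = (cexp (I * (j * s + s : ℝ)), 0) := by
          rw [rotR_apply]
          simp only [← Complex.exp_add, mul_zero]
          rw [show I * s + I * (j * s : ℝ) = I * (j * s + s : ℝ) by push_cast; ring]
        rw [map_sub, sub_apply, hRv]
        abel
      rw [e2]
      calc _ ≤ ‖suz strang q s - rotR s‖ * ‖v‖ + ‖rotR s‖ * ‖v - (cexp (I * (j * s : ℝ)), 0)‖ :=
            (norm_add_le _ _).trans (add_le_add (ContinuousLinearMap.le_opNorm _ _)
              (ContinuousLinearMap.le_opNorm _ _))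
        _ ≤ δ * 2 + 1 * (2 * j * δ) := by gcongr
        _ = _ := by ring
    have ej : ((j + 1 : ℕ) : ℝ) * s = j * s + s := by push_cast; ring
    have ed : 2 * ((j + 1 : ℕ) : ℝ) * δ = 2 * j * δ + 2 * δ := by push_cast; ring
    rw [ej, ed]
    exact ⟨g'.hw, g'.hdet, (norm_fst_le (suz strang q s v - (cexp (I * (j * s + s : ℝ)), 0))).trans hfine,
      by simpa using (norm_snd_le (suz strang q s v - (cexp (I * (j * s + s : ℝ)), 0))).trans hfine,
      g'.shift (by linarith) hs1⟩

/-! ### Moments of Hermite functions -/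

section moments
open Polynomial

/-- The physicists' Hermite polynomials over `ℝ`. -/
def hermR (n : ℕ) : ℝ[X] := hermP (1 : ℝ) 1 n

theorem hermR_succ (n : ℕ) : hermR (n + 1) = C 2 * X * hermR n - derivative (hermR n) := by
  rw [hermR, hermP_succ, hermR, hermP_derivative]; simp

theorem hermR_derivative (n : ℕ) : derivative (hermR n) = C (2 * n : ℝ) * hermR (n - 1) := by
  rw [hermR, hermP_derivative, hermR]; simp

theorem iteratedDeriv_gauss (n : ℕ) : iteratedDeriv n (fun y : ℝ => Real.exp (-y ^ 2)) =
    fun x => (-1) ^ n * (hermR n).eval x * Real.exp (-x ^ 2) := by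
  induction n with
  | zero => funext x; simp [hermR, hermP]
  | succ n ih =>
    rw [iteratedDeriv_succ, ih]
    funext x
    have h1 : HasDerivAt (fun x : ℝ => Real.exp (-x ^ 2)) (Real.exp (-x ^ 2) * -(2 * x)) x := by
      have := ((hasDerivAt_pow 2 x).neg).exp
      simpa using this
    have h := (((hermR n).hasDerivAt x).const_mul ((-1 : ℝ) ^ n)).mul h1
    have := h.deriv
    refine this.trans ?_
    rw [hermR_succ]
    simp
    ring

theorem hermiteFn_eq (n : ℕ) (x : ℝ) :
    hermiteFn n x = hermNorm n * (Real.exp (-x ^ 2 / 2) * (hermR n).eval x) := by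
  rw [hermiteFn, hermiteH, iteratedDeriv_gauss, hermNorm]
  have h1 : Real.exp (x ^ 2) * Real.exp (-x ^ 2) = 1 := by rw [← Real.exp_add]; simp
  have h2 : (-1 : ℝ) ^ n * (-1) ^ n = 1 := by rw [← mul_pow]; simp
  linear_combination (1 / √(2 ^ n * ↑n.factorial * √Real.pi) * Real.exp (-x ^ 2 / 2) *
    (hermR n).eval x) * (h1 + (Real.exp (x ^ 2) * Real.exp (-x ^ 2)) * h2)

theorem hermiteFnC_eq_packet (n : ℕ) : hermiteFnC n = packet n 1 (1, 0) := by
  funext x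
  rw [hermiteFnC, hermiteFn_eq, packet, gaussHerm]
  simp only [add_zero, sub_zero, map_one, div_one, mul_one]
  rw [hermP_ofReal, hermR]
  push_cast
  simp

/-- The Gaussian integral `∫ P(x) e^{-x²} dx` of a polynomial. -/
def gaussInt (P : ℝ[X]) : ℝ := ∫ x : ℝ, P.eval x * Real.exp (-x ^ 2)

theorem integrable_gaussInt (P : ℝ[X]) : Integrable fun x : ℝ => P.eval x * Real.exp (-x ^ 2) := by
  simpa using integrable_poly_gauss one_pos P

theorem gaussInt_add (P Q : ℝ[X]) : gaussInt (P + Q) = gaussInt P + gaussInt Q := by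
  rw [gaussInt, gaussInt, gaussInt, ← integral_add (integrable_gaussInt P) (integrable_gaussInt Q)]
  simp [add_mul]

theorem gaussInt_C_mul (c : ℝ) (P : ℝ[X]) : gaussInt (C c * P) = c * gaussInt P := by
  rw [gaussInt, gaussInt, ← integral_const_mul]
  simp [mul_assoc]

theorem gaussInt_mono {P Q : ℝ[X]} (h : ∀ x, P.eval x ≤ Q.eval x) : gaussInt P ≤ gaussInt Q :=
  integral_mono (integrable_gaussInt P) (integrable_gaussInt Q) fun x => by
    have := h x
    dsimp only
    gcongr

/-- Integration by parts against the weight `e^{-x²}`. -/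
theorem gaussInt_parts (P : ℝ[X]) : gaussInt (C 2 * X * P) = gaussInt (derivative P) := by
  have h : gaussInt (derivative P + C (-1) * (C 2 * X * P)) = 0 := by
    refine integral_eq_zero_of_hasDerivAt_of_integrable
      (f := fun x : ℝ => P.eval x * Real.exp (-x ^ 2)) (fun x => ?_)
      (integrable_gaussInt _) (integrable_gaussInt _)
    have h1 : HasDerivAt (fun x : ℝ => Real.exp (-x ^ 2)) (Real.exp (-x ^ 2) * -(2 * x)) x := by
      have := ((hasDerivAt_pow 2 x).neg).exp
      simpa using this
    refine ((P.hasDerivAt x).mul h1).congr_deriv ?_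
    simp
    ring
  rw [gaussInt_add, gaussInt_C_mul] at h
  linarith

/-- The creation operator `H_n ↦ H_{n+1}` is adjoint to differentiation. -/
theorem gaussInt_hermR_succ_mul (n : ℕ) (P : ℝ[X]) :
    gaussInt (hermR (n + 1) * P) = gaussInt (hermR n * derivative P) := by
  have e : C 2 * X * (hermR n * P) =
      hermR (n + 1) * P + derivative (hermR n) * P := by
    rw [hermR_succ]; ring
  have h := gaussInt_parts (hermR n * P)
  rw [e, derivative_mul, gaussInt_add, gaussInt_add] at h
  linarith

theorem gaussInt_hermR_sq_succ (n : ℕ) :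
    gaussInt (hermR (n + 1) ^ 2) = 2 * (n + 1) * gaussInt (hermR n ^ 2) := by
  rw [sq, gaussInt_hermR_succ_mul, hermR_derivative, ← gaussInt_C_mul]
  congr 1
  push_cast
  ring

theorem gaussInt_hermR_sq (n : ℕ) :
    gaussInt (hermR n ^ 2) = 2 ^ n * n.factorial * Real.sqrt Real.pi := by
  induction n with
  | zero =>
    have := integral_gaussian 1
    simp only [div_one] at this
    simp [gaussInt, hermR, hermP]
    simpa using this
  | succ n ih =>
    rw [gaussInt_hermR_sq_succ, ih, Nat.factorial_succ]
    push_cast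
    ring

theorem hermNorm_sq_mul (n : ℕ) : hermNorm n ^ 2 * gaussInt (hermR n ^ 2) = 1 := by
  have h : 0 < 2 ^ n * n.factorial * Real.sqrt Real.pi := by positivity
  rw [gaussInt_hermR_sq, hermNorm, div_pow, one_pow, Real.sq_sqrt h.le]
  field_simp

theorem hermR_three_term (n : ℕ) (x : ℝ) : (hermR (n + 1)).eval x =
    2 * x * (hermR n).eval x - 2 * n * (hermR (n - 1)).eval x := by
  rw [hermR_succ, hermR_derivative]; simp

/-- The norm of `n(n-1)H_{n-2}`, written without division. -/
theorem gaussInt_hermR_sub_two (n : ℕ) :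
    gaussInt ((C (n * (n - 1) : ℝ) * hermR (n - 2)) ^ 2) =
      n * (n - 1) / 4 * gaussInt (hermR n ^ 2) := by
  rw [mul_pow, ← C_pow, gaussInt_C_mul]
  match n with
  | 0 => simp
  | 1 => simp
  | n + 2 =>
    rw [gaussInt_hermR_sq_succ (n + 1), gaussInt_hermR_sq_succ n]
    push_cast
    ring

/-- Multiplication by `x²` in the Hermite basis. -/
theorem sq_mul_hermR (n : ℕ) (x : ℝ) : x ^ 2 * (hermR n).eval x =
    1 / 4 * (hermR (n + 2)).eval x + (n + 1 / 2) * (hermR n).eval x +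
      n * (n - 1) * (hermR (n - 2)).eval x := by
  have h1 := hermR_three_term (n + 1) x
  have h2 := hermR_three_term n x
  simp only [Nat.add_sub_cancel] at h1
  push_cast at h1
  match n with
  | 0 => simp at h1 h2 ⊢; rw [h1, h2]; ring
  | n + 1 =>
    have h3 := hermR_three_term n x
    simp only [Nat.add_sub_cancel] at h2
    rw [show n + 1 - 2 = n - 1 by omega]
    push_cast at h1 h2 ⊢
    linear_combination (-1 / 4) * h1 - x / 2 * h2 - (n + 1) / 2 * h3

/-- The polynomial part of `x ψ_n'` in the Hermite basis; here `ψ_n' = e^{-x²/2} (H_n' - x H_n)` up to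
normalisation. -/
theorem mul_deriv_hermR (n : ℕ) (x : ℝ) :
    x * ((derivative (hermR n)).eval x - x * (hermR n).eval x) =
    -(1 / 4) * (hermR (n + 2)).eval x - 1 / 2 * (hermR n).eval x +
      n * (n - 1) * (hermR (n - 2)).eval x := by
  have h0 := sq_mul_hermR n x
  have h1 := hermR_three_term (n + 1) x
  have h2 := congrArg (Polynomial.eval x) (hermR_succ n)
  simp only [Nat.add_sub_cancel] at h1
  push_cast at h1
  simp at h2
  linear_combination h0 + x * h2 + h1 / 2

/-- Norm of a combination of `H_{n+2}`, `H_n` and `n(n-1) H_{n-2}`, relative to the norm of `H_n`.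
The sign `s = ± 1` covers both `x² ψ_n` and `x ψ_n'`. -/
theorem gaussInt_three_le (n : ℕ) (b : ℝ) (s : ℝ) (hs : s ^ 2 = 1) :
    gaussInt ((C (s / 4) * hermR (n + 2) + C b * hermR n +
      C (n * (n - 1) : ℝ) * hermR (n - 2)) ^ 2) ≤
      3 * ((n + 2) ^ 2 / 2 + b ^ 2) * gaussInt (hermR n ^ 2) := by
  have h1 : gaussInt ((C (s / 4) * hermR (n + 2) + C b * hermR n +
      C (n * (n - 1) : ℝ) * hermR (n - 2)) ^ 2) ≤
      gaussInt (C 3 * (C (s ^ 2 / 16) * hermR (n + 2) ^ 2 + C (b ^ 2) * hermR n ^ 2 +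
        (C (n * (n - 1) : ℝ) * hermR (n - 2)) ^ 2)) := by
    refine gaussInt_mono fun x => ?_
    simp only [eval_pow, eval_add, eval_mul, eval_C]
    generalize (hermR n).eval x = B
    generalize (hermR (n + 2)).eval x = A
    generalize n * (n - 1) * (hermR (n - 2)).eval x = D
    nlinarith [sq_nonneg (s / 4 * A - b * B), sq_nonneg (s / 4 * A - D), sq_nonneg (b * B - D)]
  refine h1.trans ?_
  have hN : 0 ≤ gaussInt (hermR n ^ 2) := by rw [gaussInt_hermR_sq]; positivity
  rw [gaussInt_C_mul, gaussInt_add, gaussInt_add, gaussInt_C_mul, gaussInt_C_mul,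
    gaussInt_hermR_sub_two, gaussInt_hermR_sq_succ (n + 1), gaussInt_hermR_sq_succ n, hs]
  generalize gaussInt (hermR n ^ 2) = N at hN ⊢
  have hn : (0 : ℝ) ≤ n := n.cast_nonneg
  push_cast
  nlinarith [mul_nonneg hn hN, mul_nonneg (mul_nonneg hn hn) hN]

end moments

/-! ### Dilations and the distance between packets -/

section dilation
open Polynomial

/-- Cauchy–Schwarz on the unit interval. -/
theorem sq_integral_le {f : ℝ → ℝ} (hf : Continuous f) :
    (∫ θ in (0 : ℝ)..1, f θ) ^ 2 ≤ ∫ θ in (0 : ℝ)..1, f θ ^ 2 := by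
  set c := ∫ θ in (0 : ℝ)..1, f θ with hc
  have h : 0 ≤ ∫ θ in (0 : ℝ)..1, (f θ - c) ^ 2 :=
    intervalIntegral.integral_nonneg zero_le_one fun _ _ => sq_nonneg _
  have e : ∫ θ in (0 : ℝ)..1, (f θ - c) ^ 2 =
      (∫ θ in (0 : ℝ)..1, f θ ^ 2) - 2 * c * (∫ θ in (0 : ℝ)..1, f θ) + c ^ 2 := by
    rw [← intervalIntegral.integral_const_mul, ← intervalIntegral.integral_sub
      ((by fun_prop : Continuous fun θ => f θ ^ 2).intervalIntegrable _ _)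
      ((by fun_prop : Continuous fun θ => 2 * c * f θ).intervalIntegrable _ _)]
    have : ∫ θ in (0 : ℝ)..1, c ^ 2 = c ^ 2 := by simp
    rw [← this, ← intervalIntegral.integral_add
      ((by fun_prop : Continuous fun θ => f θ ^ 2 - 2 * c * f θ).intervalIntegrable _ _)
      (continuous_const.intervalIntegrable _ _)]
    congr 1; funext θ; ring
  rw [e, ← hc] at h
  linarith

/-- Dilating `G` by `l` moves it in `L²` by at most `√8 |l - 1|` times the norm of `x G'(x)`. The path
is `θ ↦ G ((1 + θ (l - 1)) x)`, and the constant bounds `(1 + θ (l - 1)) ^ (-3)`. It is phrased with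
the lower integral, so that Tonelli's theorem needs no joint integrability. -/
theorem lintegral_dilate_le {G G' : ℝ → ℝ} (hG : ∀ x, HasDerivAt G (G' x) x)
    (hG' : Continuous G') {l K : ℝ} (hl : 1 / 2 ≤ l)
    (hxG : Integrable fun x => (x * G' x) ^ 2) (hK : ∫ x, (x * G' x) ^ 2 ≤ K) :
    ∫⁻ x, ENNReal.ofReal ((G (l * x) - G x) ^ 2) ≤ ENNReal.ofReal (8 * (l - 1) ^ 2 * K) := by
  have hpt : ∀ x, ENNReal.ofReal ((G (l * x) - G x) ^ 2) ≤
      ∫⁻ θ in Set.Ioc (0 : ℝ) 1, ENNReal.ofReal (((l - 1) * x * G' ((1 + θ * (l - 1)) * x)) ^ 2) := by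
    intro x
    have hc : Continuous fun θ : ℝ => (l - 1) * x * G' ((1 + θ * (l - 1)) * x) := by fun_prop
    have e : ∫ θ in (0 : ℝ)..1, (l - 1) * x * G' ((1 + θ * (l - 1)) * x) = G (l * x) - G x := by
      rw [intervalIntegral.integral_eq_sub_of_hasDerivAt
        (f := fun θ => G ((1 + θ * (l - 1)) * x)) (fun θ _ => ?_) (hc.intervalIntegrable _ _)]
      · simp
      · have h1 : HasDerivAt (fun θ : ℝ => (1 + θ * (l - 1)) * x) ((l - 1) * x) θ := by
          simpa using ((((hasDerivAt_id θ).mul_const (l - 1)).const_add 1).mul_const x)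
        exact ((hG _).comp θ h1).congr_deriv (by ring)
    rw [← e]
    refine (ENNReal.ofReal_le_ofReal (sq_integral_le hc)).trans_eq ?_
    rw [intervalIntegral.integral_of_le zero_le_one]
    exact ofReal_integral_eq_lintegral_ofReal ((hc.pow 2).integrableOn_Ioc)
      (Filter.Eventually.of_forall fun _ => sq_nonneg _)
  refine (lintegral_mono hpt).trans ?_
  rw [lintegral_lintegral_swap]
  swap
  · have hc : Continuous fun p : ℝ × ℝ =>
        ((l - 1) * p.1 * G' ((1 + p.2 * (l - 1)) * p.1)) ^ 2 := by fun_prop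
    exact (ENNReal.measurable_ofReal.comp hc.measurable).aemeasurable
  have hin : ∀ θ ∈ Set.Ioc (0 : ℝ) 1,
      ∫⁻ x, ENNReal.ofReal (((l - 1) * x * G' ((1 + θ * (l - 1)) * x)) ^ 2) ≤
        ENNReal.ofReal (8 * (l - 1) ^ 2 * K) := by
    intro θ hθ
    have hm : 1 / 2 ≤ 1 + θ * (l - 1) := by nlinarith [hθ.1, hθ.2]
    set m := 1 + θ * (l - 1)
    have hm0 : 0 < m := by linarith
    have e : ∀ x, ((l - 1) * x * G' (m * x)) ^ 2 =
        (l - 1) ^ 2 * m⁻¹ ^ 2 * (fun y => (y * G' y) ^ 2) (m * x) := by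
      intro x; field_simp
    simp only [e]
    have hi := (hxG.comp_mul_left' hm0.ne').const_mul ((l - 1) ^ 2 * m⁻¹ ^ 2)
    rw [← ofReal_integral_eq_lintegral_ofReal hi
      (Filter.Eventually.of_forall fun _ => by positivity)]
    refine ENNReal.ofReal_le_ofReal ?_
    rw [integral_const_mul, Measure.integral_comp_mul_left (fun y => (y * G' y) ^ 2),
      abs_of_pos (inv_pos.2 hm0), smul_eq_mul]
    have hmi : m⁻¹ ≤ 2 := by rw [inv_le_comm₀ hm0 two_pos]; linarith
    have hmi0 : 0 < m⁻¹ := inv_pos.2 hm0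
    have hI : 0 ≤ ∫ y, (y * G' y) ^ 2 := integral_nonneg fun _ => sq_nonneg _
    calc _ = m⁻¹ ^ 3 * (l - 1) ^ 2 * ∫ y, (y * G' y) ^ 2 := by ring
      _ ≤ 2 ^ 3 * (l - 1) ^ 2 * K := by gcongr
      _ = _ := by ring
  refine (setLIntegral_mono measurable_const hin).trans ?_
  simp

theorem integral_dilate_le {G G' : ℝ → ℝ} (hG : ∀ x, HasDerivAt G (G' x) x)
    (hG' : Continuous G') {l K : ℝ} (hl : 1 / 2 ≤ l)
    (hxG : Integrable fun x => (x * G' x) ^ 2) (hK : ∫ x, (x * G' x) ^ 2 ≤ K) :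
    ∫ x, (G (l * x) - G x) ^ 2 ≤ 8 * (l - 1) ^ 2 * K := by
  have hGc : Continuous G := continuous_iff_continuousAt.2 fun x => (hG x).continuousAt
  have hK0 : 0 ≤ K := le_trans (integral_nonneg fun _ => sq_nonneg _) hK
  rw [integral_eq_lintegral_of_nonneg_ae (Filter.Eventually.of_forall fun _ => sq_nonneg _)
    (by fun_prop)]
  exact ENNReal.toReal_le_of_le_ofReal (by positivity) (lintegral_dilate_le hG hG' hl hxG hK)

theorem hermiteFn_sq_poly (n : ℕ) (P : ℝ[X]) (x : ℝ) :
    (hermNorm n * (Real.exp (-x ^ 2 / 2) * P.eval x)) ^ 2 =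
      hermNorm n ^ 2 * ((P ^ 2).eval x * Real.exp (-x ^ 2)) := by
  have : Real.exp (-x ^ 2) = Real.exp (-x ^ 2 / 2) ^ 2 := by
    rw [← Real.exp_nat_mul]; congr 1; push_cast; ring
  rw [this, eval_pow]; ring

theorem integrable_sq_poly (n : ℕ) (P : ℝ[X]) :
    Integrable fun x : ℝ => (hermNorm n * (Real.exp (-x ^ 2 / 2) * P.eval x)) ^ 2 := by
  simp only [hermiteFn_sq_poly]
  exact (integrable_gaussInt _).const_mul _

theorem integral_sq_poly (n : ℕ) (P : ℝ[X]) :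
    ∫ x : ℝ, (hermNorm n * (Real.exp (-x ^ 2 / 2) * P.eval x)) ^ 2 =
      hermNorm n ^ 2 * gaussInt (P ^ 2) := by
  simp only [hermiteFn_sq_poly]
  rw [integral_const_mul, gaussInt]

theorem integrable_hermiteFn_sq (n : ℕ) : Integrable fun x => hermiteFn n x ^ 2 := by
  simp only [hermiteFn_eq]; exact integrable_sq_poly n _

theorem integral_hermiteFn_sq (n : ℕ) : ∫ x, hermiteFn n x ^ 2 = 1 := by
  simp only [hermiteFn_eq]
  rw [integral_sq_poly, hermNorm_sq_mul]

theorem three_poly_le (n : ℕ) (b s : ℝ) (hs : s ^ 2 = 1) (hb : b ^ 2 ≤ (n + 2) ^ 2) {f : ℝ → ℝ}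
    (hf : ∀ x, f x = hermNorm n * (Real.exp (-x ^ 2 / 2) * (s / 4 * (hermR (n + 2)).eval x +
      b * (hermR n).eval x + n * (n - 1) * (hermR (n - 2)).eval x))) :
    Integrable (fun x => f x ^ 2) ∧ ∫ x, f x ^ 2 ≤ 5 * (n + 2) ^ 2 := by
  have e : ∀ x, f x = hermNorm n * (Real.exp (-x ^ 2 / 2) *
      (C (s / 4) * hermR (n + 2) + C b * hermR n +
        C (n * (n - 1) : ℝ) * hermR (n - 2)).eval x) := by
    intro x; rw [hf]; simp
  simp only [e]
  refine ⟨integrable_sq_poly _ _, ?_⟩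
  rw [integral_sq_poly]
  have h1 := mul_le_mul_of_nonneg_left (gaussInt_three_le n b s hs) (sq_nonneg (hermNorm n))
  have h2 := hermNorm_sq_mul n
  refine h1.trans ?_
  calc _ = 3 * ((n + 2) ^ 2 / 2 + b ^ 2) * (hermNorm n ^ 2 * gaussInt (hermR n ^ 2)) := by ring
    _ ≤ _ := by rw [h2]; nlinarith

theorem sq_mul_hermiteFn (n : ℕ) :
    Integrable (fun x => (x ^ 2 * hermiteFn n x) ^ 2) ∧
      ∫ x, (x ^ 2 * hermiteFn n x) ^ 2 ≤ 5 * (n + 2) ^ 2 := by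
  refine three_poly_le n (n + 1 / 2) 1 (one_pow 2)
    (by nlinarith [n.cast_nonneg (α := ℝ)]) fun x => ?_
  rw [hermiteFn_eq]
  linear_combination hermNorm n * Real.exp (-x ^ 2 / 2) * sq_mul_hermR n x

theorem hasDerivAt_hermiteFn (n : ℕ) (x : ℝ) : HasDerivAt (hermiteFn n)
    (hermNorm n * (Real.exp (-x ^ 2 / 2) *
      ((derivative (hermR n)).eval x - x * (hermR n).eval x))) x := by
  have h1 : HasDerivAt (fun x : ℝ => Real.exp (-x ^ 2 / 2)) (Real.exp (-x ^ 2 / 2) * -x) x := by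
    have := (((hasDerivAt_pow 2 x).neg).div_const 2).exp
    refine this.congr_deriv ?_
    simp; ring
  rw [funext (hermiteFn_eq n)]
  exact ((h1.mul ((hermR n).hasDerivAt x)).const_mul _).congr_deriv (by ring)

theorem dilate_hermiteFn (n : ℕ) {l : ℝ} (hl : 1 / 2 ≤ l) :
    ∫ x, (hermiteFn n (l * x) - hermiteFn n x) ^ 2 ≤ 8 * (l - 1) ^ 2 * (5 * (n + 2) ^ 2) := by
  obtain ⟨h1, h2⟩ := three_poly_le n (-1 / 2) (-1) (by norm_num) (by nlinarith [n.cast_nonneg (α := ℝ)])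
    (f := fun x => x * (hermNorm n * (Real.exp (-x ^ 2 / 2) *
      ((derivative (hermR n)).eval x - x * (hermR n).eval x)))) (fun x => by
        have := mul_deriv_hermR n x
        linear_combination hermNorm n * Real.exp (-x ^ 2 / 2) * this)
  exact integral_dilate_le (hasDerivAt_hermiteFn n) (by fun_prop) hl h1 h2

end dilation

section distance
open ComplexConjugate

theorem norm_pow_sub_pow_le {a b : ℂ} (ha : ‖a‖ = 1) (hb : ‖b‖ = 1) (n : ℕ) :
    ‖a ^ n - b ^ n‖ ≤ n * ‖a - b‖ := by
  induction n with
  | zero => simp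
  | succ n ih =>
    rw [show a ^ (n + 1) - b ^ (n + 1) = (a ^ n - b ^ n) * a + b ^ n * (a - b) by ring]
    refine (norm_add_le _ _).trans ?_
    rw [norm_mul, norm_mul, norm_pow, ha, hb, one_pow]
    push_cast
    linarith

/-- A packet is a Hermite function up to a phase `w μ ^ n`, a dilation `l` and a chirp `a`. With
`Q = y + z` these are `μ = |Q| / Q`, `l = 1 / |Q|` and `a = -Im (y conj z) / |Q|²`. -/
theorem packet_normal_form {τ d : ℝ} {w : ℂ} {v : ℂ × ℂ} (h : Good τ d w v) (hd : d ≤ 1 / 8) :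
    ∃ (l a : ℝ) (μ : ℂ), |l - 1| ≤ 3 * d ∧ |a| ≤ 2 * d ∧ ‖μ‖ = 1 ∧
      ‖μ - cexp (-I * τ)‖ ≤ 6 * d ∧ ∀ (n : ℕ) (x : ℝ), packet n w v x =
        w * μ ^ n * cexp (I * (a * x ^ 2 : ℝ)) * hermiteFn n (l * x) := by
  have hd0 : 0 ≤ d := (norm_nonneg _).trans h.h2
  have hQ0 := h.ne_zero
  have hr0 : 0 < ‖v.1 + v.2‖ := norm_pos_iff.2 hQ0
  have hQ := h.norm_Q
  have hQs := h.norm_Q_sub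
  have hrQ : (‖v.1 + v.2‖ : ℂ) ^ 2 = (v.1 + v.2) * conj (v.1 + v.2) := by
    rw [Complex.mul_conj, Complex.normSq_eq_norm_sq]; push_cast; rfl
  have hdet := h.hdet
  have hr1 : |1 - ‖v.1 + v.2‖| ≤ 2 * d := by
    have := abs_norm_sub_norm_le (v.1 + v.2) (cexp (I * τ))
    rw [norm_exp_I, abs_sub_comm] at this
    linarith
  have him : |(v.1 * conj v.2).im| ≤ 9 / 8 * d := by
    refine (Complex.abs_im_le_norm _).trans ?_
    rw [norm_mul, Complex.norm_conj]
    have := h.norm_fst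
    have h2 := h.h2
    gcongr
    linarith
  have hP : (v.1 - v.2) * conj (v.1 + v.2) = 1 + 2 * I * (v.1 * conj v.2).im := by
    have e : (v.1 * conj v.2 - conj (v.1 * conj v.2)) = 2 * I * (v.1 * conj v.2).im := by
      rw [Complex.sub_conj]; push_cast; ring
    rw [← e, ← hdet]
    simp only [map_add, map_mul, Complex.conj_conj]
    ring
  generalize (v.1 * conj v.2).im = m at him hP
  have hrC : ((‖v.1 + v.2‖ : ℝ) : ℂ) ≠ 0 := by exact_mod_cast hr0.ne'
  set r : ℝ := ‖v.1 + v.2‖ with hrdef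
  refine ⟨r⁻¹, -m * r⁻¹ ^ 2, r / (v.1 + v.2), ?_, ?_, ?_, ?_, ?_⟩
  · rw [show r⁻¹ - 1 = (1 - r) / r by field_simp, abs_div, abs_of_pos hr0, div_le_iff₀ hr0]
    nlinarith
  · rw [show -m * r⁻¹ ^ 2 = -m / r ^ 2 by field_simp, abs_div, abs_neg,
      abs_of_pos (pow_pos hr0 2), div_le_iff₀ (pow_pos hr0 2)]
    have : (3 / 4 : ℝ) ^ 2 ≤ r ^ 2 := by gcongr; linarith
    nlinarith
  · rw [norm_div, Complex.norm_real, norm_norm, div_self hr0.ne']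
  · have e : (r : ℂ) / (v.1 + v.2) - cexp (-I * τ) =
        (-((1 - r : ℝ) : ℂ) - cexp (-I * τ) * (v.1 + v.2 - cexp (I * τ))) / (v.1 + v.2) := by
      have e1 : cexp (-I * τ) * cexp (I * τ) = 1 := by rw [← Complex.exp_add]; simp
      rw [eq_div_iff hQ0, sub_mul, div_mul_cancel₀ _ hQ0]
      push_cast
      linear_combination -e1
    rw [e, norm_div, ← hrdef, div_le_iff₀ hr0]
    refine (norm_sub_le _ _).trans ?_
    have e2 : ‖cexp (-I * τ)‖ = 1 := by simpa using norm_exp_I (-τ)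
    rw [norm_neg, Complex.norm_real, Real.norm_eq_abs, norm_mul, e2]
    nlinarith
  · intro n x
    have hβ : 1 / (v.1 + v.2) = r / (v.1 + v.2) * (((r⁻¹ : ℝ) : ℂ) * 1) := by
      push_cast; field_simp
    have hκ : conj (v.1 + v.2) / (v.1 + v.2) = (r / (v.1 + v.2)) ^ 2 * 1 := by
      rw [div_pow, hrQ]; field_simp
    have hα : (v.1 - v.2) / (v.1 + v.2) = (1 + 2 * I * m) * (r : ℂ)⁻¹ ^ 2 := by
      rw [← hP, inv_pow, hrQ]
      have : conj (v.1 + v.2) ≠ 0 := (map_ne_zero _).2 hQ0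
      field_simp
    rw [packet, gaussHerm, hβ, hκ, hermP_scale, hermP_dilate, ← Complex.ofReal_mul,
      hermP_ofReal, hermiteFn_eq, hermR, hα]
    have ee : cexp (-((1 + 2 * I * m) * (r : ℂ)⁻¹ ^ 2) * x ^ 2 / 2) =
        cexp (I * (-m * r⁻¹ ^ 2 * x ^ 2 : ℝ)) * cexp (-(r⁻¹ * x) ^ 2 / 2) := by
      rw [← Complex.exp_add]; congr 1; push_cast; ring
    rw [ee]
    push_cast
    ring

/-- Closeness of the vectors, and of the branches of the square root, implies closeness of the packets
in `L²`. -/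
theorem l2norm_packet_sub {τ d : ℝ} {w : ℂ} {v : ℂ × ℂ} (h : Good τ d w v) (hd : d ≤ 1 / 8)
    (n : ℕ) : l2norm (fun x => packet n w v x -
      cexp (-I * ((n : ℂ) + 1 / 2) * τ) * hermiteFnC n x) ≤ 40 * (n + 2) * d := by
  have hd0 : 0 ≤ d := (norm_nonneg _).trans h.h2
  have hn : (0 : ℝ) ≤ n := n.cast_nonneg
  obtain ⟨l, a, μ, hl, ha, hμ, hμ', hform⟩ := packet_normal_form h hd
  have hl2 : 1 / 2 ≤ l := by linarith [(abs_le.1 hl).1]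
  have hl0 : 0 < l := by linarith
  set c := cexp (-I * ((n : ℂ) + 1 / 2) * τ) with hc
  have hcn : ‖c‖ = 1 := by
    have := norm_exp_I (-((n + 1 / 2) * τ))
    rw [hc, ← this]; congr 2; push_cast; ring
  have hwc : ‖w * μ ^ n - c‖ ≤ (3 + 6 * n) * d := by
    have e0 : ‖cexp (-I * τ)‖ = 1 := by simpa using norm_exp_I (-τ)
    have e1 : ‖cexp (-I * τ / 2)‖ = 1 := by simpa using norm_exp_I_half (-τ)
    have e : w * μ ^ n - c = (w * cexp (I * τ / 2) - 1) * (cexp (-I * τ / 2) * μ ^ n) +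
        cexp (-I * τ / 2) * (μ ^ n - cexp (-I * τ) ^ n) := by
      have h1 : cexp (I * τ / 2) * cexp (-I * τ / 2) = 1 := by
        rw [← Complex.exp_add, ← Complex.exp_zero]; congr 1; ring
      have h2 : c = cexp (-I * τ / 2) * cexp (-I * τ) ^ n := by
        rw [hc, ← Complex.exp_nat_mul, ← Complex.exp_add]; congr 1; ring
      rw [h2]
      linear_combination -(w * μ ^ n) * h1
    rw [e]
    refine (norm_add_le _ _).trans ?_
    rw [norm_mul, norm_mul, norm_mul, norm_pow, hμ, e1, one_pow, mul_one, mul_one, one_mul]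
    have h3 := norm_pow_sub_pow_le hμ e0 n
    have h4 := h.norm_u_sub hd
    have h5 : n * ‖μ - cexp (-I * τ)‖ ≤ n * (6 * d) := by gcongr
    linarith
  -- the error splits into a phase, a dilation and a chirp
  have hpt : ∀ x, Complex.normSq (packet n w v x - c * hermiteFnC n x) ≤
      3 * (((3 + 6 * n) * d) ^ 2 * hermiteFn n (l * x) ^ 2 +
        (hermiteFn n (l * x) - hermiteFn n x) ^ 2 + (2 * d) ^ 2 * (x ^ 2 * hermiteFn n x) ^ 2) := by
    intro x
    rw [hform, hermiteFnC, Complex.normSq_eq_norm_sq]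
    set E := cexp (I * (a * x ^ 2 : ℝ)) with hE
    have hE1 : ‖E‖ = 1 := norm_exp_I _
    have hE2 : ‖E - 1‖ ≤ 2 * d * x ^ 2 := by
      refine (Real.norm_exp_I_mul_ofReal_sub_one_le).trans ?_
      rw [Real.norm_eq_abs, abs_mul, abs_of_nonneg (sq_nonneg x)]
      gcongr
    generalize hermiteFn n (l * x) = A
    generalize hermiteFn n x = B
    have hb : ‖w * μ ^ n * E * A - c * B‖ ≤
        (3 + 6 * n) * d * |A| + |A - B| + 2 * d * x ^ 2 * |B| := by
      rw [show w * μ ^ n * E * A - c * B =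
        (w * μ ^ n - c) * E * A + c * E * ((A - B : ℝ) : ℂ) + c * (E - 1) * B by push_cast; ring]
      refine norm_add₃_le.trans ?_
      simp only [norm_mul, hE1, hcn, Complex.norm_real, Real.norm_eq_abs, mul_one, one_mul]
      gcongr
    have hb2 := pow_le_pow_left₀ (norm_nonneg _) hb 2
    refine hb2.trans ?_
    have e1 : ((3 + 6 * n) * d) ^ 2 * A ^ 2 = ((3 + 6 * n) * d * |A|) ^ 2 := by
      rw [mul_pow _ |A|, sq_abs]
    have e2 : (2 * d) ^ 2 * (x ^ 2 * B) ^ 2 = (2 * d * x ^ 2 * |B|) ^ 2 := by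
      rw [mul_pow _ |B|, sq_abs]; ring
    rw [e1, e2, ← sq_abs (A - B)]
    generalize (3 + 6 * n) * d * |A| = X
    generalize 2 * d * x ^ 2 * |B| = Z
    generalize |A - B| = Y
    nlinarith [sq_nonneg (X - Y), sq_nonneg (X - Z), sq_nonneg (Y - Z)]
  have i1 : Integrable fun x => hermiteFn n (l * x) ^ 2 :=
    (integrable_hermiteFn_sq n).comp_mul_left' hl0.ne'
  have hcont : Continuous (hermiteFn n) :=
    continuous_iff_continuousAt.2 fun x => (hasDerivAt_hermiteFn n x).continuousAt
  have i2 : Integrable fun x => (hermiteFn n (l * x) - hermiteFn n x) ^ 2 := by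
    refine ((i1.add (integrable_hermiteFn_sq n)).const_mul 2).mono' (by fun_prop)
      (Filter.Eventually.of_forall fun x => ?_)
    rw [Real.norm_of_nonneg (sq_nonneg _)]
    simp only [Pi.add_apply]
    nlinarith [sq_nonneg (hermiteFn n (l * x) + hermiteFn n x)]
  obtain ⟨i3, b3⟩ := sq_mul_hermiteFn n
  have b1 : ∫ x, hermiteFn n (l * x) ^ 2 ≤ 2 := by
    rw [Measure.integral_comp_mul_left (fun x => hermiteFn n x ^ 2), integral_hermiteFn_sq,
      abs_of_pos (inv_pos.2 hl0), smul_eq_mul, mul_one, inv_le_comm₀ hl0 two_pos]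
    linarith
  have b2 := dilate_hermiteFn n hl2
  have hl' : (l - 1) ^ 2 ≤ (3 * d) ^ 2 := sq_le_sq' (abs_le.1 hl).1 (abs_le.1 hl).2
  rw [l2norm]
  refine Real.sqrt_le_iff.2 ⟨by positivity, ?_⟩
  have i123 := (((i1.const_mul (((3 + 6 * n) * d) ^ 2)).add i2).add
    (i3.const_mul ((2 * d) ^ 2))).const_mul 3
  refine (integral_mono_of_nonneg (Filter.Eventually.of_forall fun _ => Complex.normSq_nonneg _)
    i123 (Filter.Eventually.of_forall hpt)).trans ?_
  have i12 : Integrable fun x => ((3 + 6 * n) * d) ^ 2 * hermiteFn n (l * x) ^ 2 +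
      (hermiteFn n (l * x) - hermiteFn n x) ^ 2 := (i1.const_mul _).add i2
  simp only [Pi.add_apply]
  rw [integral_const_mul, integral_add i12 (i3.const_mul _),
    integral_add (i1.const_mul _) i2, integral_const_mul, integral_const_mul]
  calc _ ≤ 3 * (((3 + 6 * n) * d) ^ 2 * 2 + 8 * (3 * d) ^ 2 * (5 * (n + 2) ^ 2) +
        (2 * d) ^ 2 * (5 * (n + 2) ^ 2)) := by
        gcongr
        refine b2.trans ?_
        gcongr
    _ = 3 * (2 * (3 + 6 * n) ^ 2 + 380 * (n + 2) ^ 2) * d ^ 2 := by ring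
    _ ≤ (1600 * (n + 2) ^ 2) * d ^ 2 := mul_le_mul_of_nonneg_right (by nlinarith) (sq_nonneg d)
    _ = _ := by ring

end distance

/-! ### Choice of the parameters -/

/-- With `q ≈ √X + 5` and `k ≈ 32 |T| e^{3q}` one has `5^q |T/k| ≤ e^{-q}/32`, so the accumulated error is
of size `|T| e^{3q} e^{-q(2q+3)} = |T| e^{-2q²}`, while `X + 25 ≤ q²`. -/
theorem final_choice {X : ℝ} (T : ℝ) (n : ℕ) {ε : ℝ} (hε : 0 < ε) (hε1 : ε < 1) (hT : 1 ≤ |T|)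
    (hX : X = Real.log (((n : ℝ) + 2) * |T| / ε)) :
    ∃ q k : ℕ, 1 ≤ k ∧ (k : ℝ) * 5 ^ (q + 1) ≤
        10 * 32 * Real.exp 30 * |T| * Real.exp (5 * Real.sqrt X) ∧
      5 ^ q * |T / k| ≤ 1 / 32 ∧
      40 * ((n : ℝ) + 2) * (2 * k * (12 * (5 ^ q * |T / k|) ^ (2 * q + 3))) ≤ ε ∧
      2 * k * (12 * (5 ^ q * |T / k|) ^ (2 * q + 3)) ≤ 1 / 16 := by
  have hn : (0 : ℝ) ≤ n := n.cast_nonneg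
  have hT0 : 0 < |T| := by linarith
  have hZ : 2 ≤ ((n : ℝ) + 2) * |T| / ε := by
    rw [le_div_iff₀ hε]; nlinarith
  have hX0 : 0 ≤ X := by rw [hX]; exact Real.log_nonneg (by linarith)
  have hXe : ((n : ℝ) + 2) * |T| = ε * Real.exp X := by
    rw [hX, Real.exp_log (by linarith)]; field_simp
  set q := ⌈Real.sqrt X + 5⌉₊ with hq
  have hq1 : Real.sqrt X + 5 ≤ q := Nat.le_ceil _
  have hq2 : (q : ℝ) < Real.sqrt X + 5 + 1 := Nat.ceil_lt_add_one (by positivity)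
  have hs0 := Real.sqrt_nonneg X
  have hs2 := Real.sq_sqrt hX0
  have hqX : X + 25 ≤ (q : ℝ) ^ 2 := by nlinarith
  set k := ⌈32 * |T| * Real.exp (3 * q)⌉₊ with hk
  have hk1 : 32 * |T| * Real.exp (3 * q) ≤ k := Nat.le_ceil _
  have hE1 : 1 ≤ Real.exp (3 * q) := Real.one_le_exp (by positivity)
  have hbig : 1 ≤ 32 * |T| * Real.exp (3 * q) := by nlinarith
  have hk2 : (k : ℝ) ≤ 64 * |T| * Real.exp (3 * q) := by
    have := Nat.ceil_lt_add_one (a := 32 * |T| * Real.exp (3 * q)) (by positivity)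
    rw [← hk] at this
    linarith
  have hk0 : (0 : ℝ) < k := by linarith
  have h5 : (5 : ℝ) ^ q ≤ Real.exp (2 * q) := by
    rw [show (2 : ℝ) * q = q * 2 by ring, Real.exp_nat_mul]
    gcongr
    have := Real.add_one_le_exp (1 : ℝ)
    have := Real.exp_one_gt_d9
    rw [show (2 : ℝ) = 1 + 1 by norm_num, Real.exp_add]
    nlinarith
  have hstep : 5 ^ q * |T / k| ≤ Real.exp (-q) / 32 := by
    rw [abs_div, abs_of_pos hk0, ← mul_div_assoc, div_le_iff₀ hk0]
    have e : Real.exp (2 * q) = Real.exp (-q) * Real.exp (3 * q) := by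
      rw [← Real.exp_add]; congr 1; ring
    calc 5 ^ q * |T| ≤ Real.exp (2 * q) * |T| := by gcongr
      _ = Real.exp (-q) / 32 * (32 * |T| * Real.exp (3 * q)) := by rw [e]; ring
      _ ≤ _ := by gcongr
  have he1 : Real.exp (-q : ℝ) ≤ 1 := Real.exp_le_one_iff.2 (by linarith)
  have hδ : 12 * (5 ^ q * |T / k|) ^ (2 * q + 3) ≤ 12 * Real.exp (-(q * (2 * q + 3))) := by
    have h1 : 5 ^ q * |T / k| ≤ Real.exp (-q) := by linarith [Real.exp_pos (-q : ℝ)]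
    have h2 := pow_le_pow_left₀ (by positivity) h1 (2 * q + 3)
    rw [← Real.exp_nat_mul] at h2
    push_cast at h2
    rw [show (2 * (q : ℝ) + 3) * -q = -(q * (2 * q + 3)) by ring] at h2
    linarith
  have htot : 2 * k * (12 * (5 ^ q * |T / k|) ^ (2 * q + 3)) ≤ 1536 * |T| * Real.exp (-(2 * q ^ 2)) := by
    calc _ ≤ 2 * (64 * |T| * Real.exp (3 * q)) * (12 * Real.exp (-(q * (2 * q + 3)))) := by gcongr
      _ = 1536 * |T| * (Real.exp (3 * q) * Real.exp (-(q * (2 * q + 3)))) := by ring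
      _ = _ := by rw [← Real.exp_add]; congr 2; ring
  have hsmall : 40 * ((n : ℝ) + 2) * (1536 * |T| * Real.exp (-(2 * q ^ 2))) ≤ ε := by
    have h1 : Real.exp (-(2 * q ^ 2)) ≤ Real.exp (-X) * Real.exp (-50) := by
      rw [← Real.exp_add]; gcongr; nlinarith
    have h2 : Real.exp X * Real.exp (-X) = 1 := by rw [← Real.exp_add]; simp
    have h3 : 61440 * Real.exp (-50) ≤ 1 := by
      rw [Real.exp_neg, ← div_eq_mul_inv, div_le_one (Real.exp_pos _)]
      have := Real.exp_one_gt_d9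
      calc (61440 : ℝ) ≤ 2 ^ 50 := by norm_num
        _ ≤ Real.exp 1 ^ 50 := by gcongr; linarith
        _ = _ := by rw [← Real.exp_nat_mul]; norm_num
    calc _ = 61440 * (((n : ℝ) + 2) * |T|) * Real.exp (-(2 * q ^ 2)) := by ring
      _ ≤ 61440 * (((n : ℝ) + 2) * |T|) * (Real.exp (-X) * Real.exp (-50)) := by gcongr
      _ = ε * (Real.exp X * Real.exp (-X)) * (61440 * Real.exp (-50)) := by rw [hXe]; ring
      _ ≤ ε * 1 * 1 := by rw [h2]; gcongr
      _ = ε := by ring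
  refine ⟨q, k, by exact_mod_cast hbig.trans hk1, ?_, by linarith, ?_, ?_⟩
  · calc (k : ℝ) * 5 ^ (q + 1) = 5 * k * 5 ^ q := by ring
      _ ≤ 5 * (64 * |T| * Real.exp (3 * q)) * Real.exp (2 * q) := by gcongr
      _ = 10 * 32 * |T| * Real.exp (5 * q) := by
        rw [show (5 : ℝ) * q = 3 * q + 2 * q by ring, Real.exp_add]; ring
      _ ≤ 10 * 32 * |T| * Real.exp (30 + 5 * Real.sqrt X) := by gcongr; linarith
      _ = _ := by rw [Real.exp_add]; ring
  · refine le_trans ?_ hsmall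
    gcongr
  · have h0 : 0 ≤ 1536 * |T| * Real.exp (-(2 * q ^ 2)) := by positivity
    nlinarith

/-- Subexponential Trotter–Suzuki simulation of the QHO evolution: `U(t)ψₙ` can be
prepared within `L²`-precision `ε` by `(U_p(t/k))^k`, a product of at most
`k·5^p ≤ C|t| exp(γ √(log((n+2)|t|/ε)))` Trotter–Suzuki exponentials. -/
theorem trotter_suzuki_qho_subexponential_simulation :
    ∃ γ C : ℝ, 0 < γ ∧ 0 < C ∧
      ∀ n : ℕ, ∀ ε : ℝ, 0 < ε → ε < 1 → ∀ t : ℝ, 1 ≤ |t| →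
        ∃ p k : ℕ, 1 ≤ p ∧ 1 ≤ k ∧
          ((k : ℝ) * 5 ^ p ≤
            C * |t| * Real.exp (γ * Real.sqrt (Real.log (((n : ℝ) + 2) * |t| / ε)))) ∧
          l2norm (fun x => (Uapprox p (t / k))^[k] (hermiteFnC n) x -
              Complex.exp (-Complex.I * ((n : ℂ) + 1 / 2) * t) * hermiteFnC n x)
            ≤ ε := by
  refine ⟨5, 10 * 32 * Real.exp 30, by norm_num, by positivity, fun n ε hε hε1 t ht => ?_⟩
  obtain ⟨q, k, hk, hcost, hs, herr, hd⟩ := final_choice t n hε hε1 ht rfl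
  refine ⟨q + 1, k, by omega, hk, hcost, ?_⟩
  obtain ⟨w, v, hv, hgood⟩ := iterate_packet n q hs le_rfl k hd
  have hk0 : (k : ℝ) ≠ 0 := by exact_mod_cast (by omega : k ≠ 0)
  rw [mul_div_cancel₀ t hk0] at hgood
  have h := l2norm_packet_sub hgood (by linarith) n
  rw [← hv, ← hermiteFnC_eq_packet] at h
  exact h.trans herr

end
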